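/- Let d ≥ 2 and let ρ, h_{λ,ℓ} be as in the context, and let c₀, C₀ > 0 satisfy c₀ < |∇ρ(ξ)| ≤ C₀ for all ξ ≠ 0. Let K_{λ,ℓ} := F^{−1}[h_{λ,ℓ}∘ρ] (a Schwartz function). Then for every N ∈ ℕ there is a constant C_N such that for all integers ℓ ≥ 0: |K_{λ,ℓ}(x)| ≤ C_N |x|^{−N} whenever |x| ≥ 2^{ℓ+2} C₀, and |K_{λ,ℓ}(x)| ≤ C_N 2^{−ℓN} whenever |x| ≤ 2^{ℓ−2} c₀. -/

import Mathlib

open MeasureTheory Filter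
open scoped ENNReal NNReal RealInnerProductSpace BigOperators Topology

noncomputable section

/-- `ℝ^d` as a Euclidean space. -/
abbrev Euc (d : ℕ) : Type := EuclideanSpace ℝ (Fin d)

/-- The geometric setup: `Ω` is a bounded open convex subset of `ℝ^d` containing the origin,
`ρ` is its Minkowski functional, which is assumed to be smooth away from the origin and
positive away from the origin. -/
structure IsMinkowskiGauge (d : ℕ) (Ω : Set (Euc d)) (ρ : Euc d → ℝ) : Prop where
  isOpen : IsOpen Ω
  convex : Convex ℝ Ω
  isBounded : Bornology.IsBounded Ω
  zero_mem : (0 : Euc d) ∈ Ω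
  eq_gauge : ρ = gauge Ω
  smooth : ContDiffOn ℝ (⊤ : ℕ∞) ρ {(0 : Euc d)}ᶜ
  pos : ∀ ξ : Euc d, ξ ≠ 0 → 0 < ρ ξ

/-- Everywhere nonvanishing Gaussian curvature of `∂Ω = {ρ = 1}`: for every `ξ ≠ 0`
the Hessian of `ρ` at `ξ` has rank `d - 1`. -/
def HasNonvanishingCurvature (d : ℕ) (ρ : Euc d → ℝ) : Prop :=
  ∀ ξ : Euc d, ξ ≠ 0 →
    LinearMap.rank ((fderiv ℝ (fderiv ℝ ρ) ξ : Euc d →L[ℝ] (Euc d →L[ℝ] ℝ)) :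
      Euc d →ₗ[ℝ] (Euc d →L[ℝ] ℝ)) = (d - 1 : ℕ)

/-- The Fourier transform `f̂(ξ) = ∫ f(y) e^{−i⟨y,ξ⟩} dy` on `ℝ^d`. -/
def FTd {d : ℕ} (f : Euc d → ℂ) (ξ : Euc d) : ℂ :=
  ∫ y : Euc d, f y * Complex.exp (-(Complex.I * (⟪y, ξ⟫ : ℂ)))

/-- The Riesz mean `R^λ_{a,t} f(x) = (2π)^{-d} ∫ (1 - ρ(ξ)^a/t^a)_+^λ f̂(ξ) e^{i⟨x,ξ⟩} dξ`. -/
def RieszMean {d : ℕ} (ρ : Euc d → ℝ) (a lam t : ℝ) (f : Euc d → ℂ) (x : Euc d) : ℂ :=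
  (((2 * Real.pi) ^ d)⁻¹ : ℝ) •
    ∫ ξ : Euc d, ((max (1 - ρ ξ ^ a / t ^ a) 0) ^ lam : ℝ) •
      (FTd f ξ * Complex.exp (Complex.I * (⟪x, ξ⟫ : ℂ)))

/-- The critical index `λ(p) = d(1/p - 1/2) - 1/2`. -/
def criticalIndex (d : ℕ) (p : ℝ) : ℝ := (d : ℝ) * (1 / p - 1 / 2) - 1 / 2

/-- One-dimensional Fourier transform `φ̂(ϱ) = ∫ φ(s) e^{-isϱ} ds`. -/
def FT1 (φ : ℝ → ℂ) (ϱ : ℝ) : ℂ :=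
  ∫ s : ℝ, φ s * Complex.exp (-(Complex.I * (s : ℂ) * (ϱ : ℂ)))

/-- One-dimensional Fourier transform of a real-valued function. -/
def FT1R (Φ : ℝ → ℝ) : ℝ → ℂ := FT1 (fun s => (Φ s : ℂ))

/-- The pieces `h_{λ,ℓ}` of the decomposition of the Riesz multiplier. -/
def hfun (χ Φ Ψ : ℝ → ℝ) (lam : ℝ) : ℕ → ℝ → ℂ
  | 0 => fun ϱ => ((2 * Real.pi)⁻¹ * χ ϱ : ℝ) •
      ∫ u : ℝ, ((max (1 - u) 0) ^ lam : ℝ) • FT1R Φ (ϱ - u)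
  | (ℓ + 1) => fun ϱ => ((2 * Real.pi)⁻¹ * χ ϱ : ℝ) •
      ∫ u : ℝ, ((max (1 - u) 0) ^ lam : ℝ) •
        (((2 : ℝ) ^ ℓ) • FT1R Ψ ((2 : ℝ) ^ ℓ * (ϱ - u)))

/-- The data entering the construction of `h_{λ,ℓ}`: a cutoff `χ ∈ C_c^∞((1/2,2))`, an even
`Φ = Φ∘ ∈ C_c^∞(ℝ)` with `Φ∘ = 1` on `[-1/2,1/2]`, `supp Φ∘ ⊆ [-1,1]`, satisfying the moment
cancellation conditions, and `Ψ(x) = Φ∘(x/2) - Φ∘(x)`. -/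
structure HData (lam : ℝ) (N0 : ℕ) (χ Φ Ψ : ℝ → ℝ) : Prop where
  hχsm : ContDiff ℝ (⊤ : ℕ∞) χ
  hχsupp : Function.support χ ⊆ Set.Ioo (1/2 : ℝ) 2
  hΦsm : ContDiff ℝ (⊤ : ℕ∞) Φ
  hΦeven : ∀ s, Φ (-s) = Φ s
  hΦone : ∀ s : ℝ, |s| ≤ 1/2 → Φ s = 1
  hΦzero : ∀ s : ℝ, 1 ≤ |s| → Φ s = 0
  hΦcanc : ∀ j : ℕ, j ≤ N0 → (j : ℝ) ≠ lam →
    (∫ ϱ in Set.Ioi (0 : ℝ), ((ϱ ^ lam : ℝ) : ℂ) * iteratedDeriv j (FT1R Φ) ϱ) = 0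
  hΨ : Ψ = fun x => Φ (x / 2) - Φ x

/-- Inverse Fourier transform on `ℝ^d`. -/
def invFTd {d : ℕ} (m : Euc d → ℂ) (x : Euc d) : ℂ :=
  (((2 * Real.pi) ^ d)⁻¹ : ℝ) •
    ∫ ξ : Euc d, m ξ * Complex.exp (Complex.I * (⟪x, ξ⟫ : ℂ))

/-- The Fourier multiplier operator `m(D) f = (𝓕⁻¹ m) * f`. -/
def mulOp {d : ℕ} (m : Euc d → ℂ) (f : Euc d → ℂ) (x : Euc d) : ℂ :=
  ∫ y : Euc d, invFTd m (x - y) * f y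

/-- The Hardy–Littlewood maximal function. -/
def HLMaximal {d : ℕ} (w : Euc d → ℝ) (x : Euc d) : ℝ≥0∞ :=
  ⨆ r : {r : ℝ // 0 < r},
    (volume (Metric.ball x r.1))⁻¹ * ∫⁻ y in Metric.ball x r.1, ENNReal.ofReal (w y)

/-- `w` is an `A₁` weight. -/
structure IsA1Weight {d : ℕ} (w : Euc d → ℝ) : Prop where
  nonneg : ∀ x, 0 ≤ w x
  locInt : LocallyIntegrable w volume
  ne_zero : ¬ (w =ᵐ[(volume : Measure (Euc d))] (0 : Euc d → ℝ))
  maximal_le : ∃ C : ℝ, ∀ᵐ x ∂(volume : Measure (Euc d)),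
    HLMaximal w x ≤ ENNReal.ofReal (C * w x)

/-- `w` satisfies a reverse Hölder inequality with exponent `σ`. -/
def IsRH {d : ℕ} (σ : ℝ) (w : Euc d → ℝ) : Prop :=
  ∃ C : ℝ, ∀ (x : Euc d) (r : ℝ), 0 < r →
    ((volume (Metric.ball x r))⁻¹ *
        ∫⁻ y in Metric.ball x r, ENNReal.ofReal (w y) ^ σ) ^ (1 / σ) ≤
      ENNReal.ofReal C *
        ((volume (Metric.ball x r))⁻¹ * ∫⁻ y in Metric.ball x r, ENNReal.ofReal (w y))

/-- The weighted `L^p(w)` (quasi-)norm. -/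
def wLpNorm {d : ℕ} (p : ℝ) (w : Euc d → ℝ) (g : Euc d → ℂ) : ℝ≥0∞ :=
  (∫⁻ x, (‖g x‖₊ : ℝ≥0∞) ^ p * ENNReal.ofReal (w x)) ^ (1 / p)

/-- The weighted weak `L^{p,∞}(w)` (quasi-)norm. -/
def wWeakNorm {d : ℕ} (p : ℝ) (w : Euc d → ℝ) (g : Euc d → ℂ) : ℝ≥0∞ :=
  ⨆ α : {α : ℝ // 0 < α},
    ENNReal.ofReal α.1 *
      (∫⁻ x in {x : Euc d | α.1 < ‖g x‖}, ENNReal.ofReal (w x)) ^ (1 / p)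

/-- A (half-open, axes-parallel) cube `x + [0,s)^d` in `ℝ^d`. -/
def IsCube {d : ℕ} (Q : Set (Euc d)) : Prop :=
  ∃ (x : Euc d) (s : ℝ), 0 < s ∧ Q = {y : Euc d | ∀ i, y i ∈ Set.Ico (x i) (x i + s)}

/-- The average `⟨f⟩_{Q,p} = (|Q|⁻¹ ∫_Q |f|^p)^{1/p}`. -/
def cubeAvg {d : ℕ} (p : ℝ) (Q : Set (Euc d)) (f : Euc d → ℂ) : ℝ≥0∞ :=
  ((volume Q)⁻¹ * ∫⁻ x in Q, (‖f x‖₊ : ℝ≥0∞) ^ p) ^ (1 / p)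

/-- A `γ`-sparse (finite) family of cubes. -/
def IsSparseFamily {d : ℕ} (γ : ℝ) (𝔖 : Finset (Set (Euc d))) : Prop :=
  (∀ Q ∈ 𝔖, IsCube Q) ∧
  ∃ E : Set (Euc d) → Set (Euc d),
    (∀ Q ∈ 𝔖, MeasurableSet (E Q) ∧ E Q ⊆ Q ∧
      ENNReal.ofReal γ * volume Q ≤ volume (E Q)) ∧
    (𝔖 : Set (Set (Euc d))).Pairwise fun Q Q' => Disjoint (E Q) (E Q')

/-- The maximal sparse form `Λ*_{p,q}(f₁,f₂)` (supremum over `1/2`-sparse families). -/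
def sparseFormMax {d : ℕ} (p q : ℝ) (f₁ f₂ : Euc d → ℂ) : ℝ≥0∞ :=
  ⨆ 𝔖 : {𝔖 : Finset (Set (Euc d)) // IsSparseFamily (1/2) 𝔖},
    ∑ Q ∈ 𝔖.1, volume Q * cubeAvg p Q f₁ * cubeAvg q Q f₂

/-- The sparse bound `T ∈ Sp(p,q)`. -/
def SparseBound {d : ℕ} (p q : ℝ) (T : (Euc d → ℂ) → Euc d → ℂ) : Prop :=
  ∃ C : ℝ, ∀ f₁ f₂ : Euc d → ℂ,
    ContDiff ℝ (⊤ : ℕ∞) f₁ → HasCompactSupport f₁ →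
    ContDiff ℝ (⊤ : ℕ∞) f₂ → HasCompactSupport f₂ →
    ENNReal.ofReal ‖∫ x, T f₁ x * f₂ x‖ ≤ ENNReal.ofReal C * sparseFormMax p q f₁ f₂

/-- The exponent `r_*(p, p∘, r∘)`. -/
def rStar (d : ℕ) (p p0 r0 : ℝ) : ℝ :=
  if p ≤ 2 * ((d : ℝ) + 1) / ((d : ℝ) + 3) then
    (((d : ℝ) + 1) / ((d : ℝ) - 1) * (1 - 1 / p))⁻¹
  else
    ((1 / r0 * (((d : ℝ) + 3) / (2 * ((d : ℝ) + 1)) - 1 / p) +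
        1 / 2 * (1 / p - 1 / p0)) /
      (((d : ℝ) + 3) / (2 * ((d : ℝ) + 1)) - 1 / p0))⁻¹

/-- The exponent `q_*(p, p∘, r∘)`, the conjugate of `r_*(p, p∘, r∘)`. -/
def qStar (d : ℕ) (p p0 r0 : ℝ) : ℝ := (1 - 1 / rStar d p p0 r0)⁻¹

/-- The trapezoid `∏_d(λ)` with corners `P₁, P₂, P₃, P₄`. -/
def trapez (d : ℕ) (lam : ℝ) : Set (ℝ × ℝ) :=
  convexHull ℝ
    {((2*lam + (d:ℝ) + 1)/(2*(d:ℝ)), ((d:ℝ) - 2*lam - 1)/(2*(d:ℝ))),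
     ((2*lam + (d:ℝ) + 1)/(2*(d:ℝ)),
       ((d:ℝ) - 1)/(2*(d:ℝ)) + lam*((d:ℝ) + 1)/((d:ℝ)*((d:ℝ) - 1))),
     (((d:ℝ) - 1)/(2*(d:ℝ)) + lam*((d:ℝ) + 1)/((d:ℝ)*((d:ℝ) - 1)),
       (2*lam + (d:ℝ) + 1)/(2*(d:ℝ))),
     (((d:ℝ) - 2*lam - 1)/(2*(d:ℝ)), (2*lam + (d:ℝ) + 1)/(2*(d:ℝ)))}

/-- A dyadic cube `2^k(m + [0,1)^d)`, recorded by its generation `k` and position `m`. -/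
structure DyadicCube (d : ℕ) where
  k : ℤ
  m : Fin d → ℤ
deriving DecidableEq

/-- The subset of `ℝ^d` corresponding to a dyadic cube. -/
def DyadicCube.set {d : ℕ} (Q : DyadicCube d) : Set (Euc d) :=
  {x : Euc d | ∀ i, x i ∈ Set.Ico ((2:ℝ) ^ Q.k * (Q.m i : ℝ)) ((2:ℝ) ^ Q.k * ((Q.m i : ℝ) + 1))}

/-- `μ(𝔔) = Σ_{Q ∈ 𝔔} |Q|`. -/
def dyadicMeasure {d : ℕ} (𝔔 : Finset (DyadicCube d)) : ℝ≥0∞ :=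
  ∑ Q ∈ 𝔔, volume Q.set

/-- The class `𝒴_M` of normalized bump functions. -/
def MemYM (M : ℕ) (χ : ℝ → ℂ) : Prop :=
  ContDiff ℝ (M : ℕ∞) χ ∧ Function.support χ ⊆ Set.Ioo (1/2 : ℝ) 2 ∧
    ∑ ν ∈ Finset.range (M + 1), (⨆ s : ℝ, ‖iteratedDeriv ν χ s‖) ≤ 1

/-- The function `Σ_{j ≥ 1} 2^{j(d+1)/2} m_j(D)[Σ_{Q ∈ 𝔇_j} f_Q]` appearing in `VBR(p,r)`,
where `m_j(ξ) = χ_j(2^j(1 - ρ(ξ)))`. -/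
def vbrSum {d : ℕ} (ρ : Euc d → ℝ) (χ : ℕ → ℝ → ℂ) (𝔉 : Finset (DyadicCube d))
    (f : DyadicCube d → Euc d → ℂ) (x : Euc d) : ℂ :=
  Finset.sum ((𝔉.image (fun Q => Q.k)).filter (fun j => 1 ≤ j)) fun (j : ℤ) =>
    ((2:ℝ) ^ ((j : ℝ) * ((d : ℝ) + 1) / 2)) •
      mulOp (fun ξ => χ j.toNat ((2:ℝ) ^ j * (1 - ρ ξ)))
        (fun y => ∑ Q ∈ 𝔉.filter (fun Q' => Q'.k = j), f Q y) x

/-- The statement `VBR(p,r)`. -/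
def VBR (d : ℕ) (ρ : Euc d → ℝ) (p r : ℝ) : Prop :=
  ∃ (M : ℕ) (C : ℝ), 1 ≤ M ∧
    ∀ χ : ℕ → ℝ → ℂ, (∀ j : ℕ, 1 ≤ j → MemYM M (χ j)) →
    ∀ (𝔉 : Finset (DyadicCube d)) (f : DyadicCube d → Euc d → ℂ),
      (∀ Q ∈ 𝔉, Function.support (f Q) ⊆ closure Q.set) →
      eLpNorm (vbrSum ρ χ 𝔉 f) (ENNReal.ofReal r) volume ≤
        ENNReal.ofReal C *
          (∑ Q ∈ 𝔉, volume Q.set * eLpNorm (f Q) (ENNReal.ofReal p) volume ^ r) ^ (1 / r)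

/-- `Hyp(p∘, r∘)`: `VBR(p,r)` holds for all `p ∈ [2(d+1)/(d+3), p∘)`
and all `r ∈ [p, r_*(p,p∘,r∘))`. -/
def Hyp (d : ℕ) (ρ : Euc d → ℝ) (p0 r0 : ℝ) : Prop :=
  ∀ p r : ℝ, 2 * ((d : ℝ) + 1) / ((d : ℝ) + 3) ≤ p → p < p0 →
    p ≤ r → r < rStar d p p0 r0 → VBR d ρ p r

/-- The operator `A_{λ,ℓ} = 2^{ℓ(λ + (d+1)/2)} h_{λ,ℓ}(ρ(D))`. -/
def Aop {d : ℕ} (ρ : Euc d → ℝ) (h : ℕ → ℝ → ℂ) (lam : ℝ) (ℓ : ℕ)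
    (f : Euc d → ℂ) (x : Euc d) : ℂ :=
  ((2:ℝ) ^ ((ℓ : ℝ) * (lam + ((d : ℝ) + 1) / 2))) • mulOp (fun ξ => h ℓ (ρ ξ)) f x

/-- `𝒜_{s,𝔔} F = Σ_{ℓ ≥ s} Σ_{Q ∈ 𝔔_{ℓ-s}} A_{λ,ℓ}[F_Q 1_Q]`. -/
def AopSum {d : ℕ} (ρ : Euc d → ℝ) (h : ℕ → ℝ → ℂ) (lam : ℝ) (s : ℕ)
    (𝔔 : Finset (DyadicCube d)) (F : DyadicCube d → Euc d → ℂ) (x : Euc d) : ℂ :=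
  ∑ Q ∈ 𝔔, Aop ρ h lam (Q.k.toNat + s) (Q.set.indicator (F Q)) x

/-- `Ξ_{s,𝔔}[F,β] = Σ_{ℓ ≥ s} Σ_{Q ∈ 𝔔_{ℓ-s}} β(Q) A_{λ,ℓ}[F_Q 1_Q]`. -/
def XiSum {d : ℕ} (ρ : Euc d → ℝ) (h : ℕ → ℝ → ℂ) (lam : ℝ) (s : ℕ)
    (𝔔 : Finset (DyadicCube d)) (F : DyadicCube d → Euc d → ℂ)
    (β : DyadicCube d → ℂ) (x : Euc d) : ℂ :=
  ∑ Q ∈ 𝔔, β Q * Aop ρ h lam (Q.k.toNat + s) (Q.set.indicator (F Q)) x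

/-- `‖F‖_{ℓ^∞(L^p)} = sup_{Q ∈ 𝔔} ‖F_Q‖_{L^p}`. -/
def supLp {d : ℕ} (p : ℝ) (𝔔 : Finset (DyadicCube d))
    (F : DyadicCube d → Euc d → ℂ) : ℝ≥0∞ :=
  ⨆ Q ∈ 𝔔, eLpNorm (F Q) (ENNReal.ofReal p) volume

/-- `‖β‖_{ℓ^{r,1}(μ)} = ∫_0^∞ μ({Q ∈ 𝔔 : |β(Q)| > α})^{1/r} dα`. -/
def lorentzNorm {d : ℕ} (r : ℝ) (𝔔 : Finset (DyadicCube d))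
    (β : DyadicCube d → ℂ) : ℝ≥0∞ :=
  ∫⁻ α in Set.Ioi (0:ℝ),
    (∑ Q ∈ 𝔔, if α < ‖β Q‖ then volume Q.set else 0) ^ (1 / r)

/-!
The Fourier transform of `(1 - u)₊^λ` agrees away from `s = 0` with `Γ(λ + 1) e^{is} (is)^{-λ-1}`
(at frequency `-s`), and for `ℓ ≥ 1` the localisation to `|s| ∼ 2^ℓ` keeps away from the
singularity. Fourier inversion in `s` thus writes `K_{λ,ℓ}(x)` as a superposition, over
`|s| ∼ 2^ℓ`, of the oscillatory integrals `∫ χ(ρ(ξ)) e^{i(⟨x, ξ⟩ - sρ(ξ))} dξ`. The gradient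
`x - s∇ρ(ξ)` of the phase does not vanish when `|x| > C₀|s|` or `|x| ≤ c₀|s|`. After
division of the phase by `|x|`, respectively `|s|`, the parameters range over a compact set, so
repeated integration by parts in `ξ` gives decay of any order with constants independent of `ℓ`.
-/

section TopologicalSupport

variable {E F : Type*} [NormedAddCommGroup E] [NormedSpace ℝ E]
  [NormedAddCommGroup F] [NormedSpace ℝ F]

theorem contDiff_of_tsupport_subset {n : ℕ∞} {f : E → F} {U : Set E} (hU : IsOpen U)
    (hf : ContDiffOn ℝ n f U) (hsupp : tsupport f ⊆ U) : ContDiff ℝ n f :=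
  contMDiff_iff_contDiff.1 <| contMDiff_of_tsupport fun _ hx =>
    (hf.contDiffAt (hU.mem_nhds (hsupp hx))).contMDiffAt

theorem hasCompactSupport_of_abs_le {F : Type*} [Zero F] {f : ℝ → F} {b : ℝ}
    (hf : ∀ s, f s ≠ 0 → |s| ≤ b) : HasCompactSupport f :=
  HasCompactSupport.of_support_subset_isCompact isCompact_Icc fun s hs => abs_le.1 (hf s hs)

theorem continuous_mul_of_tsupport_subset {X : Type*} [TopologicalSpace X] {f g : X → ℂ}
    {U : Set X} (hU : IsOpen U) (hf : Continuous f) (hg : ContinuousOn g U)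
    (hsupp : tsupport f ⊆ U) : Continuous fun x => f x * g x :=
  continuous_of_tsupport fun _ hx => hf.continuousAt.mul <|
    hg.continuousAt (hU.mem_nhds (hsupp (tsupport_mul_subset_left hx)))

theorem integrable_mul_of_tsupport_subset {X : Type*} [TopologicalSpace X] [MeasurableSpace X]
    [OpensMeasurableSpace X] {μ : Measure X} [IsFiniteMeasureOnCompacts μ] {f g : X → ℂ}
    {U : Set X} (hU : IsOpen U) (hf : Continuous f) (hfc : HasCompactSupport f)
    (hg : ContinuousOn g U) (hsupp : tsupport f ⊆ U) : Integrable (fun x => f x * g x) μ :=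
  (continuous_mul_of_tsupport_subset hU hf hg hsupp).integrable_of_hasCompactSupport
    hfc.mul_right

theorem tsupport_slice_subset {P X F : Type*} [TopologicalSpace X] [Zero F] {a : P × X → F}
    {K : Set X} (hK : IsClosed K) (haK : ∀ p, ∀ ξ ∉ K, a (p, ξ) = 0) (p : P) :
    tsupport (fun ξ => a (p, ξ)) ⊆ K :=
  closure_minimal (fun ξ hξ => by_contra fun hξK => hξ (haK p ξ hξK)) hK

theorem exists_norm_integral_le_of_isCompact {P X : Type*} [TopologicalSpace P]
    [TopologicalSpace X] [MeasurableSpace X] {μ : Measure X} [IsFiniteMeasureOnCompacts μ]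
    {a : P × X → ℂ} {S : Set P} {K : Set X} (hS : IsCompact S) (hK : IsCompact K)
    (ha : ContinuousOn a (S ×ˢ K)) (haK : ∀ p, ∀ ξ ∉ K, a (p, ξ) = 0) :
    ∃ C : ℝ, 0 ≤ C ∧ ∀ p ∈ S, ∀ φ : X → ℝ,
      ‖∫ ξ, a (p, ξ) * Complex.exp (Complex.I * (φ ξ : ℝ)) ∂μ‖ ≤ C := by
  obtain ⟨M, hM⟩ := (hS.prod hK).exists_bound_of_continuousOn ha
  refine ⟨max M 0 * μ.real K, by positivity, fun p hp φ => ?_⟩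
  rw [← setIntegral_eq_integral_of_forall_compl_eq_zero (s := K) fun ξ hξ => by
    rw [haK p ξ hξ, zero_mul]]
  refine norm_setIntegral_le_of_norm_le_const hK.measure_lt_top fun ξ hξ => ?_
  rw [norm_mul, mul_comm Complex.I, Complex.norm_exp_ofReal_mul_I, mul_one]
  exact (hM (p, ξ) ⟨hp, hξ⟩).trans (le_max_left M 0)

end TopologicalSupport

section NonstationaryPhase

variable {P E F : Type*} [NormedAddCommGroup P] [NormedSpace ℝ P] [NormedAddCommGroup E]
  [NormedSpace ℝ E] [NormedAddCommGroup F] [NormedSpace ℝ F]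

theorem contDiffOn_cexp_I_mul {n : ℕ∞} {θ : E → ℝ} {U : Set E} (hθ : ContDiffOn ℝ n θ U) (R : ℝ) :
    ContDiffOn ℝ n (fun ξ => Complex.exp (Complex.I * (R * θ ξ : ℝ))) U :=
  (contDiffOn_const.mul
    (Complex.ofRealCLM.contDiff.comp_contDiffOn (contDiffOn_const.mul hθ))).cexp

theorem fderiv_cexp_I_mul {θ : E → ℝ} {ξ : E} (hθ : DifferentiableAt ℝ θ ξ) (R : ℝ) (v : E) :
    fderiv ℝ (fun ξ => Complex.exp (Complex.I * (R * θ ξ : ℝ))) ξ v =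
      Complex.I * R * fderiv ℝ θ ξ v * Complex.exp (Complex.I * (R * θ ξ : ℝ)) := by
  have hphase : HasFDerivAt (fun ξ => ((R * θ ξ : ℝ) : ℂ)) _ ξ :=
    Complex.ofRealCLM.hasFDerivAt.comp ξ (hθ.hasFDerivAt.const_mul R)
  rw [(hphase.const_mul Complex.I).cexp.fderiv]
  simp only [Complex.ofReal_mul, smul_apply, ContinuousLinearMap.comp_apply,
    Complex.ofRealCLM_apply, smul_eq_mul]
  ring

theorem integral_mul_fderiv_phase_mul_cexp [FiniteDimensional ℝ E] [MeasurableSpace E]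
    [BorelSpace E] {μ : Measure E} [μ.IsAddHaarMeasure] {f : E → ℂ} {θ : E → ℝ} {U : Set E}
    (hU : IsOpen U) (hf : ContDiff ℝ 1 f) (hfc : HasCompactSupport f)
    (hθ : ContDiffOn ℝ 1 θ U) (hsupp : tsupport f ⊆ U) (R : ℝ) (v : E) :
    R * ∫ ξ, f ξ * fderiv ℝ θ ξ v * Complex.exp (Complex.I * (R * θ ξ : ℝ)) ∂μ =
      Complex.I * ∫ ξ, fderiv ℝ f ξ v * Complex.exp (Complex.I * (R * θ ξ : ℝ)) ∂μ := by
  set g : E → ℂ := fun ξ => Complex.exp (Complex.I * (R * θ ξ : ℝ))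
  have hg : ContDiffOn ℝ 1 g U := contDiffOn_cexp_I_mul hθ R
  have hf' : Continuous fun ξ => fderiv ℝ f ξ v :=
    (hf.continuous_fderiv one_ne_zero).clm_apply continuous_const
  have hg' : ContinuousOn (fun ξ => fderiv ℝ g ξ v) U :=
    (hg.continuousOn_fderiv_of_isOpen hU le_rfl).clm_apply continuousOn_const
  have hparts : ∫ ξ, f ξ * fderiv ℝ g ξ v ∂μ = -∫ ξ, fderiv ℝ f ξ v * g ξ ∂μ :=
    integral_mul_fderiv_eq_neg_fderiv_mul_of_integrable
      (integrable_mul_of_tsupport_subset hU hf' (hfc.fderiv_apply ℝ v) hg.continuousOn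
        ((tsupport_fderiv_apply_subset ℝ v).trans hsupp))
      (integrable_mul_of_tsupport_subset hU hf.continuous hfc hg' hsupp)
      (integrable_mul_of_tsupport_subset hU hf.continuous hfc hg.continuousOn hsupp)
      (fun ξ _ => hf.differentiable one_ne_zero ξ)
      (fun ξ hξ => (hg.differentiableOn one_ne_zero).differentiableAt (hU.mem_nhds (hsupp hξ)))
  have hphase : ∀ ξ, f ξ * fderiv ℝ g ξ v = Complex.I * R * (f ξ * fderiv ℝ θ ξ v * g ξ) := by
    intro ξ
    by_cases hξ : ξ ∈ tsupport f
    · rw [fderiv_cexp_I_mul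
        ((hθ.differentiableOn one_ne_zero).differentiableAt (hU.mem_nhds (hsupp hξ)))]
      ring
    · simp only [image_eq_zero_of_notMem_tsupport hξ, zero_mul, mul_zero]
  simp only [hphase, integral_const_mul] at hparts
  linear_combination -Complex.I * hparts +
    R * (∫ ξ, f ξ * fderiv ℝ θ ξ v * g ξ ∂μ) * Complex.I_mul_I

/-- The derivative of `g` at a point of `P × E` in the direction `v` of the second factor. -/
def sndDeriv (g : P × E → F) (v : E) (q : P × E) : F :=
  fderiv ℝ g q (0, v)

theorem fderiv_slice {g : P × E → F} {p : P} {ξ : E} (hg : DifferentiableAt ℝ g (p, ξ)) (v : E) :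
    fderiv ℝ (fun η => g (p, η)) ξ v = sndDeriv g v (p, ξ) := by
  have hcomp := (hg.hasFDerivAt.comp ξ (hasFDerivAt_prodMk_right p ξ)).fderiv
  simp only [Function.comp_def] at hcomp
  rw [hcomp, sndDeriv]
  simp

theorem contDiffOn_sndDeriv {g : P × E → F} {Ω : Set (P × E)} (hΩ : IsOpen Ω)
    (hg : ContDiffOn ℝ (⊤ : ℕ∞) g Ω) (v : E) : ContDiffOn ℝ (⊤ : ℕ∞) (sndDeriv g v) Ω :=
  (hg.fderiv_of_isOpen hΩ (m := (⊤ : ℕ∞)) le_rfl).clm_apply contDiffOn_const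

theorem sndDeriv_eq_zero_of_notMem {g : P × E → F} {K : Set E} (hK : IsClosed K)
    (hg : ∀ p, ∀ ξ ∉ K, g (p, ξ) = 0) (v : E) (p : P) {ξ : E} (hξ : ξ ∉ K) :
    sndDeriv g v (p, ξ) = 0 := by
  have hzero : g =ᶠ[𝓝 (p, ξ)] fun _ => 0 := by
    filter_upwards [(hK.isOpen_compl.preimage continuous_snd).mem_nhds hξ] with q hq
    exact hg q.1 q.2 hq
  simp [sndDeriv, hzero.fderiv_eq]

theorem isOpen_slice {P X : Type*} [TopologicalSpace P] [TopologicalSpace X] {Ω : Set (P × X)}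
    (hΩ : IsOpen Ω) (p : P) : IsOpen {ξ | (p, ξ) ∈ Ω} :=
  hΩ.preimage (Continuous.prodMk_right p)

variable {ι : Type*} [Fintype ι] (e : Module.Basis ι ℝ E)

/-- The `j`-th coordinate of `∇θ / |∇θ|²` in the basis `e`, where `∇` is the gradient in the
second variable; this is the vector field along which one integrates by parts. -/
def phaseField (θ : P × E → ℝ) (j : ι) (q : P × E) : ℝ :=
  sndDeriv θ (e j) q / ∑ i, sndDeriv θ (e i) q ^ 2

/-- The amplitude obtained from `a` by one integration by parts along `phaseField e θ`. -/
def transposedAmplitude (θ : P × E → ℝ) (a : P × E → ℂ) (q : P × E) : ℂ :=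
  Complex.I * ∑ j, sndDeriv (fun q => a q * (phaseField e θ j q : ℂ)) (e j) q

variable {e}

theorem sum_sndDeriv_sq_ne_zero {θ : P × E → ℝ} {q : P × E} (hθ : ∃ v, sndDeriv θ v q ≠ 0) :
    ∑ i, sndDeriv θ (e i) q ^ 2 ≠ 0 := by
  contrapose! hθ
  have hbasis : (fderiv ℝ θ q : P × E →ₗ[ℝ] ℝ) ∘ₗ LinearMap.inr ℝ P E = 0 :=
    e.ext fun i => pow_eq_zero_iff two_ne_zero |>.1 <|
      (Finset.sum_eq_zero_iff_of_nonneg fun i _ => sq_nonneg _).1 hθ i (Finset.mem_univ i)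
  exact fun v => LinearMap.congr_fun hbasis v

theorem sum_phaseField_mul_sndDeriv {θ : P × E → ℝ} {q : P × E} (hθ : ∃ v, sndDeriv θ v q ≠ 0) :
    ∑ j, phaseField e θ j q * sndDeriv θ (e j) q = 1 := by
  simp only [phaseField, div_mul_eq_mul_div, ← sq, ← Finset.sum_div]
  exact div_self (sum_sndDeriv_sq_ne_zero hθ)

variable {Ω : Set (P × E)} {θ : P × E → ℝ} {a : P × E → ℂ} {K : Set E}

theorem contDiffOn_mul_phaseField (hΩ : IsOpen Ω) (hθ : ContDiffOn ℝ (⊤ : ℕ∞) θ Ω)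
    (hne : ∀ q ∈ Ω, ∃ v, sndDeriv θ v q ≠ 0) (ha : ContDiffOn ℝ (⊤ : ℕ∞) a Ω) (j : ι) :
    ContDiffOn ℝ (⊤ : ℕ∞) (fun q => a q * (phaseField e θ j q : ℂ)) Ω :=
  ha.mul <| Complex.ofRealCLM.contDiff.comp_contDiffOn <|
    (contDiffOn_sndDeriv hΩ hθ _).div
      (ContDiffOn.sum fun i _ => (contDiffOn_sndDeriv hΩ hθ (e i)).pow 2)
      fun q hq => sum_sndDeriv_sq_ne_zero (hne q hq)

theorem contDiffOn_transposedAmplitude (hΩ : IsOpen Ω) (hθ : ContDiffOn ℝ (⊤ : ℕ∞) θ Ω)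
    (hne : ∀ q ∈ Ω, ∃ v, sndDeriv θ v q ≠ 0) (ha : ContDiffOn ℝ (⊤ : ℕ∞) a Ω) :
    ContDiffOn ℝ (⊤ : ℕ∞) (transposedAmplitude e θ a) Ω :=
  contDiffOn_const.mul <| ContDiffOn.sum fun j _ =>
    contDiffOn_sndDeriv hΩ (contDiffOn_mul_phaseField hΩ hθ hne ha j) (e j)

theorem transposedAmplitude_eq_zero_of_notMem (hK : IsClosed K)
    (haK : ∀ p, ∀ ξ ∉ K, a (p, ξ) = 0) (p : P) {ξ : E} (hξ : ξ ∉ K) :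
    transposedAmplitude e θ a (p, ξ) = 0 := by
  have hterm : ∀ j, sndDeriv (fun q => a q * (phaseField e θ j q : ℂ)) (e j) (p, ξ) = 0 := fun j =>
    sndDeriv_eq_zero_of_notMem hK (fun p η hη => by rw [haK p η hη, zero_mul]) _ p hξ
  simp only [transposedAmplitude, hterm, Finset.sum_const_zero, mul_zero]

theorem contDiffOn_slice {n : ℕ∞} {g : P × E → F} (hg : ContDiffOn ℝ n g Ω) (p : P) :
    ContDiffOn ℝ n (fun ξ => g (p, ξ)) {ξ | (p, ξ) ∈ Ω} :=
  hg.comp (contDiff_prodMk_right p).contDiffOn fun _ hξ => hξ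

theorem contDiff_slice {n : ℕ∞} (hΩ : IsOpen Ω) (ha : ContDiffOn ℝ n a Ω) (hK : IsClosed K)
    (haK : ∀ p, ∀ ξ ∉ K, a (p, ξ) = 0) {p : P} (hp : ∀ ξ ∈ K, (p, ξ) ∈ Ω) :
    ContDiff ℝ n fun ξ => a (p, ξ) :=
  contDiff_of_tsupport_subset (isOpen_slice hΩ p) (contDiffOn_slice ha p)
    ((tsupport_slice_subset hK haK p).trans hp)

variable [MeasurableSpace E] [BorelSpace E] {μ : Measure E}

theorem integrable_mul_cexp_phase [IsFiniteMeasureOnCompacts μ] (hΩ : IsOpen Ω)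
    (hθ : ContDiffOn ℝ (⊤ : ℕ∞) θ Ω) (ha : ContDiffOn ℝ (⊤ : ℕ∞) a Ω) (hK : IsCompact K)
    (haK : ∀ p, ∀ ξ ∉ K, a (p, ξ) = 0) {p : P} (hp : ∀ ξ ∈ K, (p, ξ) ∈ Ω) (R : ℝ) :
    Integrable (fun ξ => a (p, ξ) * Complex.exp (Complex.I * (R * θ (p, ξ) : ℝ))) μ :=
  integrable_mul_of_tsupport_subset (isOpen_slice hΩ p)
    (contDiff_slice hΩ ha hK.isClosed haK hp).continuous
    (HasCompactSupport.intro hK (haK p))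
    (contDiffOn_cexp_I_mul (contDiffOn_slice hθ p) R).continuousOn
    ((tsupport_slice_subset hK.isClosed haK p).trans hp)

theorem integral_mul_sndDeriv_phase_mul_cexp [FiniteDimensional ℝ E] [μ.IsAddHaarMeasure]
    (hΩ : IsOpen Ω) (hθ : ContDiffOn ℝ (⊤ : ℕ∞) θ Ω) (ha : ContDiffOn ℝ (⊤ : ℕ∞) a Ω)
    (hK : IsCompact K) (haK : ∀ p, ∀ ξ ∉ K, a (p, ξ) = 0) {p : P} (hp : ∀ ξ ∈ K, (p, ξ) ∈ Ω)
    (R : ℝ) (v : E) :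
    R * ∫ ξ, a (p, ξ) * sndDeriv θ v (p, ξ) * Complex.exp (Complex.I * (R * θ (p, ξ) : ℝ)) ∂μ =
      Complex.I * ∫ ξ, sndDeriv a v (p, ξ) *
        Complex.exp (Complex.I * (R * θ (p, ξ) : ℝ)) ∂μ := by
  have hparts := integral_mul_fderiv_phase_mul_cexp (μ := μ) (isOpen_slice hΩ p)
    ((contDiff_slice hΩ ha hK.isClosed haK hp).of_le (by simp))
    (HasCompactSupport.intro hK (haK p)) ((contDiffOn_slice hθ p).of_le (by simp))
    ((tsupport_slice_subset hK.isClosed haK p).trans hp) R v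
  have hslice : ∀ {G : Type} [NormedAddCommGroup G] [NormedSpace ℝ G] {g : P × E → G},
      ContDiffOn ℝ (⊤ : ℕ∞) g Ω → ∀ ξ ∈ K,
      fderiv ℝ (fun η => g (p, η)) ξ v = sndDeriv g v (p, ξ) := fun hg ξ hξ =>
    fderiv_slice ((hg.differentiableOn (by simp)).differentiableAt (hΩ.mem_nhds (hp ξ hξ))) v
  have hphase : ∀ ξ, a (p, ξ) * fderiv ℝ (fun η => θ (p, η)) ξ v =
      a (p, ξ) * sndDeriv θ v (p, ξ) := fun ξ => by
    by_cases hξ : ξ ∈ K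
    · rw [hslice hθ ξ hξ]
    · rw [haK p ξ hξ, zero_mul, zero_mul]
  have hamp : ∀ ξ, fderiv ℝ (fun η => a (p, η)) ξ v = sndDeriv a v (p, ξ) := fun ξ => by
    by_cases hξ : ξ ∈ K
    · exact hslice ha ξ hξ
    · rw [sndDeriv_eq_zero_of_notMem hK.isClosed haK v p hξ, fderiv_of_notMem_tsupport ℝ fun h =>
        hξ (tsupport_slice_subset hK.isClosed haK p h), zero_apply]
  simpa only [← Complex.ofReal_mul, hphase, hamp] using hparts

theorem integral_transposedAmplitude [FiniteDimensional ℝ E] [μ.IsAddHaarMeasure]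
    (hΩ : IsOpen Ω) (hθ : ContDiffOn ℝ (⊤ : ℕ∞) θ Ω) (hne : ∀ q ∈ Ω, ∃ v, sndDeriv θ v q ≠ 0)
    (ha : ContDiffOn ℝ (⊤ : ℕ∞) a Ω) (hK : IsCompact K) (haK : ∀ p, ∀ ξ ∉ K, a (p, ξ) = 0)
    {p : P} (hp : ∀ ξ ∈ K, (p, ξ) ∈ Ω) (R : ℝ) :
    ∫ ξ, transposedAmplitude e θ a (p, ξ) * Complex.exp (Complex.I * (R * θ (p, ξ) : ℝ)) ∂μ =
      R * ∫ ξ, a (p, ξ) * Complex.exp (Complex.I * (R * θ (p, ξ) : ℝ)) ∂μ := by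
  set osc : E → ℂ := fun ξ => Complex.exp (Complex.I * (R * θ (p, ξ) : ℝ))
  set b : ι → P × E → ℂ := fun j q => a q * (phaseField e θ j q : ℂ) with hb_def
  have hb : ∀ j, ContDiffOn ℝ (⊤ : ℕ∞) (b j) Ω := contDiffOn_mul_phaseField hΩ hθ hne ha
  have hbK : ∀ j p, ∀ ξ ∉ K, b j (p, ξ) = 0 := fun j p ξ hξ => by
    simp only [hb_def, haK p ξ hξ, zero_mul]
  have hb'K : ∀ j p, ∀ ξ ∉ K, sndDeriv (b j) (e j) (p, ξ) = 0 := fun j p ξ hξ =>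
    sndDeriv_eq_zero_of_notMem hK.isClosed (hbK j) _ p hξ
  have hint : ∀ j, Integrable (fun ξ => b j (p, ξ) * sndDeriv θ (e j) (p, ξ) * osc ξ) μ := fun j =>
    integrable_mul_cexp_phase (a := fun q => b j q * sndDeriv θ (e j) q) hΩ hθ
      ((hb j).mul (Complex.ofRealCLM.contDiff.comp_contDiffOn (contDiffOn_sndDeriv hΩ hθ _)))
      hK (fun p ξ hξ => by rw [hbK j p ξ hξ, zero_mul]) hp R
  have hint' : ∀ j, Integrable (fun ξ => sndDeriv (b j) (e j) (p, ξ) * osc ξ) μ := fun j =>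
    integrable_mul_cexp_phase hΩ hθ (contDiffOn_sndDeriv hΩ (hb j) _) hK (hb'K j) hp R
  have hone : ∀ ξ, ∑ j, b j (p, ξ) * sndDeriv θ (e j) (p, ξ) = a (p, ξ) := fun ξ => by
    by_cases hξ : ξ ∈ K
    · have hunit := congrArg ((↑) : ℝ → ℂ) (sum_phaseField_mul_sndDeriv (e := e) (hne _ (hp ξ hξ)))
      push_cast at hunit
      simp only [hb_def, mul_assoc, ← Finset.mul_sum, hunit, mul_one]
    · simp only [hbK _ p ξ hξ, haK p ξ hξ, zero_mul, Finset.sum_const_zero]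
  calc ∫ ξ, transposedAmplitude e θ a (p, ξ) * osc ξ ∂μ
      = ∑ j, Complex.I * ∫ ξ, sndDeriv (b j) (e j) (p, ξ) * osc ξ ∂μ := by
        simp only [transposedAmplitude, mul_assoc, Finset.sum_mul, integral_const_mul]
        rw [integral_finsetSum _ fun j _ => hint' j, Finset.mul_sum]
    _ = ∑ j, R * ∫ ξ, b j (p, ξ) * sndDeriv θ (e j) (p, ξ) * osc ξ ∂μ :=
        Finset.sum_congr rfl fun j _ => (integral_mul_sndDeriv_phase_mul_cexp hΩ hθ (hb j) hK
          (hbK j) hp R (e j)).symm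
    _ = R * ∫ ξ, a (p, ξ) * osc ξ ∂μ := by
        rw [← Finset.mul_sum, ← integral_finsetSum _ fun j _ => hint j]
        simp only [← Finset.sum_mul, hone]

theorem exists_norm_integral_mul_cexp_le_of_sndDeriv_ne_zero [FiniteDimensional ℝ E]
    [μ.IsAddHaarMeasure] (hΩ : IsOpen Ω) (hθ : ContDiffOn ℝ (⊤ : ℕ∞) θ Ω)
    (hne : ∀ q ∈ Ω, ∃ v, sndDeriv θ v q ≠ 0) {S : Set P} (hS : IsCompact S) (hK : IsCompact K)
    (hSK : S ×ˢ K ⊆ Ω) (N : ℕ) (ha : ContDiffOn ℝ (⊤ : ℕ∞) a Ω)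
    (haK : ∀ p, ∀ ξ ∉ K, a (p, ξ) = 0) :
    ∃ C : ℝ, 0 ≤ C ∧ ∀ p ∈ S, ∀ R : ℝ, 0 < R →
      ‖∫ ξ, a (p, ξ) * Complex.exp (Complex.I * (R * θ (p, ξ) : ℝ)) ∂μ‖ ≤ C * (R ^ N)⁻¹ := by
  induction N generalizing a with
  | zero =>
    obtain ⟨C, hC, hbound⟩ :=
      exists_norm_integral_le_of_isCompact (μ := μ) hS hK (ha.continuousOn.mono hSK) haK
    exact ⟨C, hC, fun p hp R _ => by
      simpa only [pow_zero, inv_one, mul_one] using hbound p hp fun ξ => R * θ (p, ξ)⟩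
  | succ N ih =>
    let e := Module.finBasis ℝ E
    obtain ⟨C, hC, hbound⟩ := ih (contDiffOn_transposedAmplitude (e := e) hΩ hθ hne ha)
      fun p ξ hξ => transposedAmplitude_eq_zero_of_notMem hK.isClosed haK p hξ
    refine ⟨C, hC, fun p hp R hR => ?_⟩
    have hstep := hbound p hp R hR
    rw [integral_transposedAmplitude hΩ hθ hne ha hK haK (fun ξ hξ => hSK ⟨hp, hξ⟩) R, norm_mul,
      Complex.norm_real, Real.norm_of_nonneg hR.le] at hstep
    rw [pow_succ, mul_inv, ← mul_assoc, ← div_eq_mul_inv _ R, le_div_iff₀' hR]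
    exact hstep

end NonstationaryPhase

section OscillatoryIntegral

variable {E : Type*} [NormedAddCommGroup E] [InnerProductSpace ℝ E]

/-- The phase `⟨ω, ξ⟩ - σ ρ(ξ)`, as a function of the parameters `(ω, σ)` and of `ξ`. -/
def levelPhase (ρ : E → ℝ) (q : (E × ℝ) × E) : ℝ :=
  ⟪q.1.1, q.2⟫ - q.1.2 * ρ q.2

/-- The oscillatory integral `∫ q(ξ) e^{i(⟨x, ξ⟩ - s ρ(ξ))} dξ`, the inverse Fourier transform
(up to normalisation) of the modulated symbol `q e^{-isρ}`. -/
def oscIntegral [MeasureSpace E] (q : E → ℂ) (ρ : E → ℝ) (x : E) (s : ℝ) : ℂ :=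
  ∫ ξ, q ξ * Complex.exp (Complex.I * (⟪x, ξ⟫ - s * ρ ξ : ℝ))

/-- The points where `ρ` is under control (those of `U`) and where `|∇ρ(ξ)| ≠ |ω| / |σ|`, which
keeps `levelPhase ρ` nonstationary. -/
def nonstationarySet (ρ : E → ℝ) (U : Set E) : Set ((E × ℝ) × E) :=
  {q | q.2 ∈ U ∧ ‖q.1.1‖ ≠ |q.1.2| * ‖fderiv ℝ ρ q.2‖}

variable {ρ : E → ℝ} {U : Set E}

theorem isOpen_nonstationarySet (hU : IsOpen U) (hρ : ContDiffOn ℝ 1 ρ U) :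
    IsOpen (nonstationarySet ρ U) := by
  have hρ' : ContinuousOn (fun q : (E × ℝ) × E => fderiv ℝ ρ q.2) (Prod.snd ⁻¹' U) :=
    (hρ.continuousOn_fderiv_of_isOpen hU le_rfl).comp continuousOn_snd fun _ hq => hq
  have hdiff : ContinuousOn (fun q : (E × ℝ) × E => ‖q.1.1‖ - |q.1.2| * ‖fderiv ℝ ρ q.2‖)
      (Prod.snd ⁻¹' U) :=
    continuousOn_fst.fst.norm.sub (continuousOn_fst.snd.abs.mul hρ'.norm)
  convert hdiff.isOpen_inter_preimage (hU.preimage continuous_snd) isOpen_compl_singleton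
    (t := {0}ᶜ) using 1
  ext q
  simp [nonstationarySet, sub_eq_zero]

theorem contDiffOn_levelPhase (hρ : ContDiffOn ℝ (⊤ : ℕ∞) ρ U) :
    ContDiffOn ℝ (⊤ : ℕ∞) (levelPhase ρ) (Prod.snd ⁻¹' U) :=
  (contDiff_fst.fst.inner ℝ contDiff_snd).contDiffOn.sub
    (contDiff_fst.snd.contDiffOn.mul (hρ.comp contDiffOn_snd fun _ hq => hq))

theorem sndDeriv_levelPhase {q : (E × ℝ) × E} (hρ : DifferentiableAt ℝ ρ q.2) (v : E) :
    sndDeriv (levelPhase ρ) v q = ⟪q.1.1, v⟫ - q.1.2 * fderiv ℝ ρ q.2 v := by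
  have hphase : HasFDerivAt (levelPhase ρ) _ q :=
    (hasFDerivAt_fst.fst.inner ℝ hasFDerivAt_snd).sub
      (hasFDerivAt_fst.snd.mul (hρ.hasFDerivAt.comp q hasFDerivAt_snd))
  simp [sndDeriv, hphase.fderiv]

theorem exists_sndDeriv_levelPhase_ne_zero {q : (E × ℝ) × E} (hρ : DifferentiableAt ℝ ρ q.2)
    (hne : ‖q.1.1‖ ≠ |q.1.2| * ‖fderiv ℝ ρ q.2‖) : ∃ v, sndDeriv (levelPhase ρ) v q ≠ 0 := by
  contrapose! hne
  have hgrad : innerSL ℝ q.1.1 = q.1.2 • fderiv ℝ ρ q.2 := by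
    ext v
    simpa [sndDeriv_levelPhase hρ, sub_eq_zero] using hne v
  rw [← innerSL_apply_norm (𝕜 := ℝ) q.1.1, hgrad, norm_smul, Real.norm_eq_abs]

variable [FiniteDimensional ℝ E] [MeasurableSpace E] [BorelSpace E] {q : E → ℂ}

theorem exists_norm_oscIntegral_le (hU : IsOpen U) (hρ : ContDiffOn ℝ (⊤ : ℕ∞) ρ U)
    (hq : ContDiff ℝ (⊤ : ℕ∞) q) (hqc : HasCompactSupport q) (hsupp : tsupport q ⊆ U)
    {S : Set (E × ℝ)} (hS : IsCompact S)
    (hne : ∀ p ∈ S, ∀ ξ ∈ tsupport q, ‖p.1‖ ≠ |p.2| * ‖fderiv ℝ ρ ξ‖) (N : ℕ) :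
    ∃ C : ℝ, 0 ≤ C ∧ ∀ p ∈ S, ∀ R : ℝ, 0 < R →
      ‖oscIntegral q ρ (R • p.1) (R * p.2)‖ ≤ C * (R ^ N)⁻¹ := by
  have hdiff : ∀ p ∈ nonstationarySet ρ U, DifferentiableAt ℝ ρ p.2 := fun p hp =>
    (hρ.differentiableOn (by simp)).differentiableAt (hU.mem_nhds hp.1)
  obtain ⟨C, hC, hbound⟩ := exists_norm_integral_mul_cexp_le_of_sndDeriv_ne_zero (μ := volume)
    (a := fun p : (E × ℝ) × E => q p.2) (isOpen_nonstationarySet hU (hρ.of_le (by simp)))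
    ((contDiffOn_levelPhase hρ).mono fun p hp => hp.1)
    (fun p hp => exists_sndDeriv_levelPhase_ne_zero (hdiff p hp) hp.2) hS hqc
    (fun p hp => ⟨hsupp hp.2, hne p.1 hp.1 p.2 hp.2⟩) N
    (hq.comp contDiff_snd).contDiffOn fun _ ξ hξ => image_eq_zero_of_notMem_tsupport hξ
  refine ⟨C, hC, fun p hp R hR => ?_⟩
  have hphase : ∀ ξ, ⟪R • p.1, ξ⟫ - R * p.2 * ρ ξ = R * levelPhase ρ (p, ξ) := fun ξ => by
    rw [levelPhase, real_inner_smul_left, mul_sub, mul_assoc]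
  simpa only [oscIntegral, hphase] using hbound p hp R hR

theorem exists_norm_oscIntegral_le_of_le_norm (hU : IsOpen U) (hρ : ContDiffOn ℝ (⊤ : ℕ∞) ρ U)
    (hq : ContDiff ℝ (⊤ : ℕ∞) q) (hqc : HasCompactSupport q) (hsupp : tsupport q ⊆ U)
    {c : ℝ} (hc : ∀ ξ ∈ tsupport q, c * ‖fderiv ℝ ρ ξ‖ < 1) (N : ℕ) :
    ∃ C : ℝ, 0 ≤ C ∧ ∀ x : E, x ≠ 0 → ∀ s : ℝ, |s| ≤ c * ‖x‖ →
      ‖oscIntegral q ρ x s‖ ≤ C * (‖x‖ ^ N)⁻¹ := by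
  obtain ⟨C, hC, hbound⟩ := exists_norm_oscIntegral_le hU hρ hq hqc hsupp
    ((isCompact_sphere (0 : E) 1).prod (isCompact_Icc (a := -c) (b := c))) (fun p hp ξ hξ => by
      have hω : ‖p.1‖ = 1 := mem_sphere_zero_iff_norm.1 hp.1
      have hσ : |p.2| ≤ c := abs_le.2 hp.2
      rw [hω]
      exact ((mul_le_mul_of_nonneg_right hσ (norm_nonneg _)).trans_lt (hc ξ hξ)).ne') N
  refine ⟨C, hC, fun x hx s hs => ?_⟩
  have hx' : 0 < ‖x‖ := norm_pos_iff.2 hx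
  have hmem : (‖x‖⁻¹ • x, s / ‖x‖) ∈ Metric.sphere (0 : E) 1 ×ˢ Set.Icc (-c) c := by
    refine ⟨by simp [norm_smul, hx], abs_le.1 ?_⟩
    rwa [abs_div, abs_norm, div_le_iff₀ hx']
  simpa [smul_smul, mul_div_cancel₀, hx'.ne'] using hbound _ hmem ‖x‖ hx'

theorem exists_norm_oscIntegral_le_of_norm_le (hU : IsOpen U) (hρ : ContDiffOn ℝ (⊤ : ℕ∞) ρ U)
    (hq : ContDiff ℝ (⊤ : ℕ∞) q) (hqc : HasCompactSupport q) (hsupp : tsupport q ⊆ U)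
    {c : ℝ} (hc : ∀ ξ ∈ tsupport q, c < ‖fderiv ℝ ρ ξ‖) (N : ℕ) :
    ∃ C : ℝ, 0 ≤ C ∧ ∀ s : ℝ, s ≠ 0 → ∀ x : E, ‖x‖ ≤ c * |s| →
      ‖oscIntegral q ρ x s‖ ≤ C * (|s| ^ N)⁻¹ := by
  obtain ⟨C, hC, hbound⟩ := exists_norm_oscIntegral_le hU hρ hq hqc hsupp
    ((isCompact_closedBall (0 : E) c).prod (isCompact_sphere (0 : ℝ) 1)) (fun p hp ξ hξ => by
      have hω : ‖p.1‖ ≤ c := mem_closedBall_zero_iff.1 hp.1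
      have hσ : |p.2| = 1 := mem_sphere_zero_iff_norm.1 hp.2
      rw [hσ, one_mul]
      exact (hω.trans_lt (hc ξ hξ)).ne) N
  refine ⟨C, hC, fun s hs x hx => ?_⟩
  have hs' : 0 < |s| := abs_pos.2 hs
  have hmem : (|s|⁻¹ • x, s / |s|) ∈ Metric.closedBall (0 : E) c ×ˢ Metric.sphere (0 : ℝ) 1 := by
    refine ⟨mem_closedBall_zero_iff.2 ?_, by simp [hs]⟩
    rwa [norm_smul, norm_inv, Real.norm_eq_abs, abs_abs, inv_mul_le_iff₀' hs']
  simpa [smul_smul, mul_div_cancel₀, hs] using hbound _ hmem |s| hs'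

end OscillatoryIntegral

section RieszMeasure

variable {lam : ℝ}

/-- The measure `(1 - u)₊ ^ lam du` on the line, encoded as the push-forward of `t ^ lam dt` on
`t > 0` under `u = 1 - t` so that no value of the density at `u = 1` enters. -/
def rieszMeasure (lam : ℝ) : Measure ℝ :=
  ((volume.restrict (Set.Ioi 0)).withDensity fun t => ENNReal.ofReal (t ^ lam)).map
    (MeasurableEquiv.subLeft (1 : ℝ))

theorem ae_toReal_ofReal_rpow_smul_eq {E : Type*} [NormedAddCommGroup E] [NormedSpace ℝ E]
    (g : ℝ → E) (lam : ℝ) : ∀ᵐ t ∂volume.restrict (Set.Ioi (0 : ℝ)),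
      (ENNReal.ofReal (t ^ lam)).toReal • g t = t ^ lam • g t := by
  filter_upwards [ae_restrict_mem measurableSet_Ioi] with t ht
  rw [ENNReal.toReal_ofReal (Real.rpow_nonneg (le_of_lt ht) lam)]

theorem integrable_rieszMeasure_iff {E : Type*} [NormedAddCommGroup E] [NormedSpace ℝ E]
    {f : ℝ → E} : Integrable f (rieszMeasure lam) ↔
      IntegrableOn (fun t => t ^ lam • f (1 - t)) (Set.Ioi 0) := by
  rw [rieszMeasure, integrable_map_equiv, integrable_withDensity_iff_integrable_smul' (by fun_prop)
    (ae_of_all _ fun _ => ENNReal.ofReal_lt_top)]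
  exact integrable_congr (ae_toReal_ofReal_rpow_smul_eq (fun t => f (1 - t)) lam)

theorem integral_rieszMeasure {E : Type*} [NormedAddCommGroup E] [NormedSpace ℝ E] (f : ℝ → E) :
    ∫ u, f u ∂rieszMeasure lam = ∫ t in Set.Ioi 0, t ^ lam • f (1 - t) := by
  rw [rieszMeasure, integral_map_equiv, integral_withDensity_eq_integral_toReal_smul (by fun_prop)
    (ae_of_all _ fun _ => ENNReal.ofReal_lt_top)]
  exact integral_congr_ae (ae_toReal_ofReal_rpow_smul_eq (fun t => f (1 - t)) lam)

theorem integral_max_rpow_smul {E : Type*} [NormedAddCommGroup E] [NormedSpace ℝ E]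
    (hlam : lam ≠ 0) (f : ℝ → E) :
    ∫ u, (max (1 - u) 0) ^ lam • f u = ∫ u, f u ∂rieszMeasure lam := by
  rw [integral_rieszMeasure, ← integral_indicator measurableSet_Ioi,
    ← integral_sub_left_eq_self _ volume 1]
  refine integral_congr_ae (ae_of_all _ fun t => ?_)
  rcases lt_or_ge 0 t with ht | ht
  · simp [ht, max_eq_left ht.le]
  · simp [ht.not_gt, max_eq_right ht, Real.zero_rpow hlam]

theorem ae_rieszMeasure_le_one (lam : ℝ) : ∀ᵐ u ∂rieszMeasure lam, u ≤ 1 := by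
  rw [rieszMeasure, (MeasurableEquiv.subLeft (1 : ℝ)).measurableEmbedding.ae_map_iff]
  refine (withDensity_absolutelyContinuous _ _).ae_le ?_
  filter_upwards [ae_restrict_mem measurableSet_Ioi] with t ht
  have : 0 < t := ht
  change 1 - t ≤ 1
  linarith

instance sFinite_rieszMeasure : SFinite (rieszMeasure lam) := by
  rw [rieszMeasure]
  infer_instance

theorem integrableOn_Ioi_rpow_mul_one_add_rpow_neg (hlam : -1 < lam) {a : ℝ}
    (ha : lam + 1 < a) :
    IntegrableOn (fun t : ℝ => t ^ lam * (1 + ‖1 - t‖) ^ (-a)) (Set.Ioi 0) := by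
  have hmeas : Measurable fun t : ℝ => t ^ lam * (1 + ‖1 - t‖) ^ (-a) := by fun_prop
  rw [← Set.Ioc_union_Ioi_eq_Ioi zero_le_one]
  refine IntegrableOn.union ?_ ?_
  · have hint : IntegrableOn (fun t : ℝ => t ^ lam) (Set.Ioc 0 1) :=
      (intervalIntegrable_iff_integrableOn_Ioc_of_le zero_le_one).1
        (intervalIntegral.intervalIntegrable_rpow' hlam)
    refine hint.mono' hmeas.aestronglyMeasurable ?_
    filter_upwards [ae_restrict_mem measurableSet_Ioc] with t ht
    rw [Real.norm_of_nonneg (by have := ht.1; positivity)]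
    refine mul_le_of_le_one_right (Real.rpow_nonneg ht.1.le lam) ?_
    exact Real.rpow_le_one_of_one_le_of_nonpos (by simp) (by linarith)
  · refine (integrableOn_Ioi_rpow_of_lt (by linarith : lam - a < -1) one_pos).mono'
      hmeas.aestronglyMeasurable ?_
    filter_upwards [ae_restrict_mem measurableSet_Ioi] with t ht
    have ht0 : 0 < t := one_pos.trans ht
    have htle : t ≤ 1 + ‖1 - t‖ := by
      rw [Real.norm_eq_abs, abs_sub_comm]
      linarith [le_abs_self (t - 1)]
    rw [Real.norm_of_nonneg (by positivity), sub_eq_add_neg lam a,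
      Real.rpow_add ht0]
    exact mul_le_mul_of_nonneg_left (Real.rpow_le_rpow_of_nonpos ht0 htle (by linarith))
      (Real.rpow_nonneg ht0.le lam)

theorem hasTemperateGrowth_rieszMeasure (hlam : -1 < lam) :
    (rieszMeasure lam).HasTemperateGrowth := by
  obtain ⟨n, hn⟩ := exists_nat_gt (lam + 1)
  exact ⟨n, integrable_rieszMeasure_iff.2 (integrableOn_Ioi_rpow_mul_one_add_rpow_neg hlam hn)⟩

/-- The Laplace transform `∫ (1 - u)₊ ^ lam * exp (z * u) du` in closed form, `z` in the right
half-plane; the imaginary axis without the origin, where the formula still makes sense, carries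
the Fourier transform. -/
def rieszLaplace (lam : ℝ) (z : ℂ) : ℂ :=
  Complex.exp z * ((1 / z) ^ ((lam + 1 : ℝ) : ℂ) * Complex.Gamma (lam + 1 : ℝ))

theorem integrable_exp_mul_rieszMeasure (hlam : -1 < lam) {r : ℝ} (hr : 0 < r) :
    Integrable (fun u => Real.exp (r * u)) (rieszMeasure lam) := by
  rw [integrable_rieszMeasure_iff]
  refine IntegrableOn.congr_fun ((integrableOn_rpow_mul_exp_neg_mul_rpow hlam one_pos
    hr).const_mul (Real.exp r)) (fun t _ => ?_) measurableSet_Ioi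
  simp only [Real.rpow_one, smul_eq_mul]
  rw [mul_left_comm, ← Real.exp_add]
  ring_nf

theorem complexMGF_rieszMeasure_ofReal (hlam : -1 < lam) {r : ℝ} (hr : 0 < r) :
    ProbabilityTheory.complexMGF id (rieszMeasure lam) r = rieszLaplace lam r := by
  rw [rieszLaplace, ← Complex.integral_cpow_mul_exp_neg_mul_Ioi (by simp; linarith) hr,
    ProbabilityTheory.complexMGF, integral_rieszMeasure, ← integral_const_mul]
  refine setIntegral_congr_fun measurableSet_Ioi fun t ht => ?_
  have hexp : Complex.exp (r * (1 - t)) = Complex.exp r * Complex.exp (-(r * t)) := by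
    rw [← Complex.exp_add]
    ring_nf
  have hpow : (t : ℂ) ^ (((lam + 1 : ℝ) : ℂ) - 1) = ((t ^ lam : ℝ) : ℂ) := by
    rw [Complex.ofReal_cpow (le_of_lt ht)]
    push_cast
    ring_nf
  simp only [id, Complex.real_smul, Complex.ofReal_sub, Complex.ofReal_one, hexp, hpow]
  ring

theorem one_div_mem_slitPlane {z : ℂ} (hz : z ∈ Complex.slitPlane) :
    1 / z ∈ Complex.slitPlane := by
  have hnormSq : 0 < Complex.normSq z := Complex.normSq_pos.2 (Complex.slitPlane_ne_zero hz)
  rw [one_div, Complex.mem_slitPlane_iff, Complex.inv_re, Complex.inv_im]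
  exact hz.imp (fun hre => div_pos hre hnormSq)
    (fun him => div_ne_zero (neg_ne_zero.2 him) hnormSq.ne')

theorem differentiableAt_rieszLaplace {z : ℂ} (hz : z ∈ Complex.slitPlane) :
    DifferentiableAt ℂ (rieszLaplace lam) z :=
  Complex.differentiableAt_exp.mul ((((differentiableAt_const _).div differentiableAt_id
    (Complex.slitPlane_ne_zero hz)).cpow_const (one_div_mem_slitPlane hz)).mul_const _)

theorem complexMGF_rieszMeasure (hlam : -1 < lam) {z : ℂ} (hz : 0 < z.re) :
    ProbabilityTheory.complexMGF id (rieszMeasure lam) z = rieszLaplace lam z := by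
  have hopen : IsOpen {z : ℂ | 0 < z.re} := isOpen_lt continuous_const Complex.continuous_re
  have hinterior : {z : ℂ | 0 < z.re} ⊆
      {z | z.re ∈ interior (ProbabilityTheory.integrableExpSet id (rieszMeasure lam))} :=
    fun w hw => interior_mono (s := Set.Ioi 0)
      (fun r hr => integrable_exp_mul_rieszMeasure hlam hr) (by rwa [interior_Ioi])
  refine (ProbabilityTheory.analyticOnNhd_complexMGF.mono
    hinterior).eqOn_of_preconnected_of_frequently_eq (DifferentiableOn.analyticOnNhd
      (fun w hw => (differentiableAt_rieszLaplace (Or.inl hw)).differentiableWithinAt) hopen)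
    (convex_halfSpace_re_gt 0).isPreconnected (z₀ := 1) (by simp) ?_ hz
  have hpos : Tendsto (fun r : ℝ => (r : ℂ)) (𝓝[>] 1) (𝓝[≠] 1) := by
    refine tendsto_nhdsWithin_iff.2 ⟨?_, ?_⟩
    · exact (Complex.continuous_ofReal.tendsto' 1 1 Complex.ofReal_one).mono_left
        nhdsWithin_le_nhds
    · filter_upwards [self_mem_nhdsWithin] with r hr
      simpa using (ne_of_gt hr : r ≠ 1)
  refine hpos.frequently (Eventually.frequently ?_)
  filter_upwards [self_mem_nhdsWithin] with r hr
  exact complexMGF_rieszMeasure_ofReal hlam (one_pos.trans hr)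

theorem norm_rieszLaplace_le (hlam : -1 ≤ lam) {z : ℂ} (hz : z.im ≠ 0) :
    ‖rieszLaplace lam z‖ ≤
      Real.exp z.re * (|z.im|⁻¹ ^ (lam + 1) * ‖Complex.Gamma (lam + 1 : ℝ)‖) := by
  rw [rieszLaplace, norm_mul, norm_mul, Complex.norm_exp, Complex.norm_cpow_real, norm_div,
    norm_one, one_div]
  gcongr
  · linarith
  · exact Complex.abs_im_le_norm z

end RieszMeasure

section TemperateConvolution

open SchwartzMap

variable {F : Type*} [NormedAddCommGroup F] [NormedSpace ℝ F] {μ : Measure ℝ}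
  [hμ : μ.HasTemperateGrowth]

theorem exists_norm_schwartzMap_sub_le (f : 𝓢(ℝ, F)) (B : ℝ) (n : ℕ) :
    ∃ C : ℝ, ∀ ϱ u : ℝ, |ϱ| ≤ B → ‖f (ϱ - u)‖ ≤ C * (1 + ‖u‖) ^ (-(n : ℝ)) := by
  obtain ⟨D, hD⟩ : ∃ D, ∀ r : ℝ, (1 + ‖r‖) ^ n * ‖f r‖ ≤ D :=
    ⟨_, fun r => by
      simpa using one_add_le_sup_seminorm_apply (𝕜 := ℝ) (m := (n, 0)) le_rfl le_rfl f r⟩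
  refine ⟨(1 + B) ^ n * D, fun ϱ u hϱ => ?_⟩
  have hB : 0 ≤ B := (abs_nonneg ϱ).trans hϱ
  have hpeetre : 1 + ‖u‖ ≤ (1 + B) * (1 + ‖ϱ - u‖) := by
    have htri : ‖u‖ ≤ ‖ϱ‖ + ‖ϱ - u‖ := by simpa using norm_sub_le ϱ (ϱ - u)
    rw [Real.norm_eq_abs ϱ] at htri
    nlinarith [norm_nonneg (ϱ - u)]
  rw [Real.rpow_neg (by positivity), Real.rpow_natCast, ← div_eq_mul_inv,
    le_div_iff₀ (by positivity), mul_comm]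
  calc (1 + ‖u‖) ^ n * ‖f (ϱ - u)‖ ≤ ((1 + B) * (1 + ‖ϱ - u‖)) ^ n * ‖f (ϱ - u)‖ := by gcongr
    _ = (1 + B) ^ n * ((1 + ‖ϱ - u‖) ^ n * ‖f (ϱ - u)‖) := by rw [mul_pow, mul_assoc]
    _ ≤ (1 + B) ^ n * D := by gcongr; exact hD _

theorem integrable_schwartzMap_sub (f : 𝓢(ℝ, F)) (ϱ : ℝ) : Integrable (fun u => f (ϱ - u)) μ := by
  obtain ⟨C, hC⟩ := exists_norm_schwartzMap_sub_le f |ϱ| μ.integrablePower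
  exact ((Measure.integrable_pow_neg_integrablePower μ).const_mul C).mono'
    (f.continuous.comp (by fun_prop : Continuous fun u => ϱ - u)).aestronglyMeasurable
    (ae_of_all _ fun u => hC ϱ u le_rfl)

theorem hasDerivAt_integral_schwartzMap_sub (f : 𝓢(ℝ, F)) (ϱ : ℝ) :
    HasDerivAt (fun r => ∫ u, f (r - u) ∂μ) (∫ u, derivCLM ℝ F f (ϱ - u) ∂μ) ϱ := by
  obtain ⟨C, hC⟩ := exists_norm_schwartzMap_sub_le (derivCLM ℝ F f) (|ϱ| + 1) μ.integrablePower
  have hbound := (Measure.integrable_pow_neg_integrablePower μ).const_mul C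
  refine (hasDerivAt_integral_of_dominated_loc_of_deriv_le (Metric.ball_mem_nhds ϱ one_pos)
    (Eventually.of_forall fun r => (integrable_schwartzMap_sub f r).aestronglyMeasurable)
    (integrable_schwartzMap_sub f ϱ)
    (integrable_schwartzMap_sub (derivCLM ℝ F f) ϱ).aestronglyMeasurable
    (ae_of_all _ fun u r hr => hC r u ?_) hbound
    (ae_of_all _ fun u r _ => (f.hasDerivAt (r - u)).comp_sub_const r u)).2
  rw [Metric.mem_ball, Real.dist_eq] at hr
  linarith [abs_sub_abs_le_abs_sub r ϱ]

theorem contDiff_integral_schwartzMap_sub (f : 𝓢(ℝ, F)) :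
    ContDiff ℝ (⊤ : ℕ∞) fun ϱ => ∫ u, f (ϱ - u) ∂μ := by
  rw [contDiff_infty]
  intro n
  induction n generalizing f with
  | zero =>
    exact contDiff_zero.2 <| continuous_iff_continuousAt.2 fun ϱ =>
      (hasDerivAt_integral_schwartzMap_sub f ϱ).continuousAt
  | succ n ih =>
    have hderiv : deriv (fun ϱ => ∫ u, f (ϱ - u) ∂μ) = fun ϱ => ∫ u, derivCLM ℝ F f (ϱ - u) ∂μ :=
      funext fun ϱ => (hasDerivAt_integral_schwartzMap_sub f ϱ).deriv
    push_cast
    rw [contDiff_succ_iff_deriv, hderiv]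
    exact ⟨fun ϱ => (hasDerivAt_integral_schwartzMap_sub f ϱ).differentiableAt, by simp, ih _⟩

theorem tendsto_integral_exp_smul_schwartzMap_sub (f : 𝓢(ℝ, F)) {b : ℝ}
    (hb : ∀ᵐ u ∂μ, u ≤ b) (ϱ : ℝ) :
    Tendsto (fun ε : ℝ => ∫ u, Real.exp (ε * u) • f (ϱ - u) ∂μ) (𝓝[>] 0)
      (𝓝 (∫ u, f (ϱ - u) ∂μ)) := by
  refine tendsto_integral_filter_of_dominated_convergence
    (fun u => Real.exp |b| * ‖f (ϱ - u)‖) (Eventually.of_forall fun ε => ?_) ?_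
    ((integrable_schwartzMap_sub f ϱ).norm.const_mul _) (ae_of_all _ fun u => ?_)
  · exact (Real.continuous_exp.comp (continuous_const_mul ε)).aestronglyMeasurable.smul
      (integrable_schwartzMap_sub f ϱ).aestronglyMeasurable
  · filter_upwards [Ioo_mem_nhdsGT one_pos] with ε hε
    filter_upwards [hb] with u hu
    rw [norm_smul, Real.norm_of_nonneg (Real.exp_pos _).le]
    gcongr
    calc ε * u ≤ ε * |b| := by gcongr; exacts [hε.1.le, hu.trans (le_abs_self b)]
      _ ≤ |b| := mul_le_of_le_one_left (abs_nonneg b) hε.2.le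
  · have hexp : Continuous fun ε : ℝ => Real.exp (ε * u) • f (ϱ - u) := by fun_prop
    simpa using (hexp.tendsto 0).mono_left nhdsWithin_le_nhds

end TemperateConvolution

section FourierOfRieszMeasure

variable {lam : ℝ} {φ : ℝ → ℂ}

open FourierTransform SchwartzMap in
theorem exists_schwartzMap_eq_FT1 (hφ : ContDiff ℝ (⊤ : ℕ∞) φ) (hφc : HasCompactSupport φ) :
    ∃ f : 𝓢(ℝ, ℂ), FT1 φ = f := by
  have hpi : (2 * Real.pi)⁻¹ ≠ 0 := by positivity
  refine ⟨compCLMOfContinuousLinearEquiv ℝ (ContinuousLinearEquiv.unitsEquivAut ℝ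
    (Units.mk0 _ hpi)) (𝓕 (hφc.toSchwartzMap hφ)), funext fun ϱ => ?_⟩
  rw [compCLMOfContinuousLinearEquiv_apply, Function.comp_apply, fourier_coe, Real.fourier_eq']
  refine integral_congr_ae (ae_of_all _ fun s => ?_)
  have hphase : -2 * Real.pi * ⟪s, ϱ * (2 * Real.pi)⁻¹⟫ = -(s * ϱ) := by
    simp only [RCLike.inner_apply, conj_trivial]
    field_simp
  simp only [ContinuousLinearEquiv.unitsEquivAut_apply, Units.val_mk0, hphase, smul_eq_mul,
    HasCompactSupport.toSchwartzMap_toFun]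
  push_cast
  ring_nf

theorem FT1_comp_div (φ : ℝ → ℂ) {a : ℝ} (ha : 0 < a) (ϱ : ℝ) :
    FT1 (fun s => φ (s / a)) ϱ = a • FT1 φ (a * ϱ) := by
  have ha' : (a : ℂ) ≠ 0 := Complex.ofReal_ne_zero.2 ha.ne'
  rw [FT1, FT1, ← abs_of_pos ha, ← Measure.integral_comp_div _ a, abs_of_pos ha]
  refine integral_congr_ae (ae_of_all _ fun s => ?_)
  simp only [Complex.ofReal_mul, Complex.ofReal_div]
  congr 3
  field_simp

theorem integral_exp_smul_FT1_sub {μ : Measure ℝ} [SFinite μ] (hφ : Integrable φ) {ε : ℝ}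
    (hε : Integrable (fun u => Real.exp (ε * u)) μ) (ϱ : ℝ) :
    ∫ u, Real.exp (ε * u) • FT1 φ (ϱ - u) ∂μ =
      ∫ s, φ s * Complex.exp (-(Complex.I * s * ϱ)) *
        ProbabilityTheory.complexMGF id μ (ε + s * Complex.I) := by
  set g : ℝ → ℝ → ℂ := fun u s =>
    Real.exp (ε * u) * (φ s * Complex.exp (-(Complex.I * s * (ϱ - u : ℝ)))) with hg
  have hint : Integrable (Function.uncurry g) (μ.prod volume) := by
    refine (hε.mul_prod hφ.norm).mono' ?_ (ae_of_all _ fun p => ?_)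
    · exact (by fun_prop : Continuous fun p : ℝ × ℝ => (Real.exp (ε * p.1) : ℂ))
        |>.aestronglyMeasurable.mul (hφ.aestronglyMeasurable.comp_snd.mul (by fun_prop))
    · simp [hg, Function.uncurry_def, Complex.norm_exp]
  calc ∫ u, Real.exp (ε * u) • FT1 φ (ϱ - u) ∂μ = ∫ u, (∫ s, g u s) ∂μ := by
        simp only [hg, integral_const_mul, FT1, Complex.real_smul]
    _ = ∫ s, ∫ u, g u s ∂μ := integral_integral_swap hint
    _ = _ := by
        refine integral_congr_ae (ae_of_all _ fun s => ?_)
        simp only [ProbabilityTheory.complexMGF, ← integral_const_mul]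
        refine integral_congr_ae (ae_of_all _ fun u => ?_)
        simp only [hg, id, Complex.ofReal_exp]
        rw [mul_left_comm, mul_assoc (φ s), ← Complex.exp_add, ← Complex.exp_add]
        push_cast
        ring_nf

theorem measurable_rieszLaplace (lam : ℝ) : Measurable (rieszLaplace lam) := by
  unfold rieszLaplace
  fun_prop

theorem norm_rieszLaplace_add_mul_I_le (hlam : -1 ≤ lam) {δ ε s : ℝ} (hδ : 0 < δ)
    (hs : δ ≤ |s|) :
    ‖rieszLaplace lam (ε + s * Complex.I)‖ ≤
      Real.exp ε * (δ⁻¹ ^ (lam + 1) * ‖Complex.Gamma (lam + 1 : ℝ)‖) := by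
  have hs0 : s ≠ 0 := abs_pos.1 (hδ.trans_le hs)
  refine (norm_rieszLaplace_le hlam (z := ε + s * Complex.I) (by simpa using hs0)).trans ?_
  simp only [Complex.add_re, Complex.ofReal_re, Complex.mul_re, Complex.I_re, mul_zero,
    Complex.ofReal_im, Complex.I_im, mul_one, sub_self, add_zero, Complex.add_im, Complex.mul_im,
    zero_add]
  gcongr
  linarith

theorem tendsto_integral_mul_rieszLaplace (hlam : -1 ≤ lam) (hφ : Integrable φ) {δ : ℝ}
    (hδ : 0 < δ) (hsupp : ∀ s, φ s ≠ 0 → δ ≤ |s|) :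
    Tendsto (fun ε : ℝ => ∫ s, φ s * rieszLaplace lam (ε + s * Complex.I)) (𝓝[>] 0)
      (𝓝 (∫ s, φ s * rieszLaplace lam (s * Complex.I))) := by
  set M := δ⁻¹ ^ (lam + 1) * ‖Complex.Gamma (lam + 1 : ℝ)‖
  refine tendsto_integral_filter_of_dominated_convergence
    (fun s => ‖φ s‖ * (Real.exp 1 * M)) (Eventually.of_forall fun ε => ?_) ?_
    (hφ.norm.mul_const _) (ae_of_all _ fun s => ?_)
  · exact hφ.aestronglyMeasurable.mul
      ((measurable_rieszLaplace lam).comp (by fun_prop)).aestronglyMeasurable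
  · filter_upwards [Ioo_mem_nhdsGT one_pos] with ε hε
    refine ae_of_all _ fun s => ?_
    rw [norm_mul]
    rcases eq_or_ne (φ s) 0 with hφs | hφs
    · simp [hφs]
    · gcongr
      refine (norm_rieszLaplace_add_mul_I_le hlam hδ (hsupp s hφs)).trans ?_
      have := hε.2.le
      gcongr
  · rcases eq_or_ne (φ s) 0 with hφs | hφs
    · simp [hφs]
    have hmem : (s * Complex.I : ℂ) ∈ Complex.slitPlane :=
      Or.inr (by simpa using abs_pos.1 (hδ.trans_le (hsupp s hφs)))
    have hline : Tendsto (fun ε : ℝ => (ε + s * Complex.I : ℂ)) (𝓝[>] 0)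
        (𝓝 (s * Complex.I)) :=
      ((by fun_prop : Continuous fun ε : ℝ => (ε + s * Complex.I : ℂ)).tendsto' 0 _
        (by simp)).mono_left nhdsWithin_le_nhds
    exact ((differentiableAt_rieszLaplace hmem).continuousAt.tendsto.comp hline).const_mul _

theorem integral_FT1_sub_rieszMeasure (hlam : -1 < lam) (hφ : ContDiff ℝ (⊤ : ℕ∞) φ)
    (hφc : HasCompactSupport φ) {δ : ℝ} (hδ : 0 < δ) (hsupp : ∀ s, φ s ≠ 0 → δ ≤ |s|) (ϱ : ℝ) :
    ∫ u, FT1 φ (ϱ - u) ∂rieszMeasure lam =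
      ∫ s, φ s * Complex.exp (-(Complex.I * s * ϱ)) * rieszLaplace lam (s * Complex.I) := by
  have := hasTemperateGrowth_rieszMeasure hlam
  have hφi : Integrable φ := hφ.continuous.integrable_of_hasCompactSupport hφc
  have hmod : Integrable fun s => φ s * Complex.exp (-(Complex.I * s * ϱ)) :=
    (hφ.continuous.mul (by fun_prop)).integrable_of_hasCompactSupport hφc.mul_right
  obtain ⟨f, hf⟩ := exists_schwartzMap_eq_FT1 hφ hφc
  -- The damping `e^{εu}`, `ε ↓ 0`, makes the double integral over `(s, u)` absolutely convergent.
  have hdamped : Tendsto (fun ε : ℝ => ∫ u, Real.exp (ε * u) • FT1 φ (ϱ - u) ∂rieszMeasure lam)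
      (𝓝[>] 0) (𝓝 (∫ u, FT1 φ (ϱ - u) ∂rieszMeasure lam)) := by
    rw [hf]
    exact tendsto_integral_exp_smul_schwartzMap_sub f (ae_rieszMeasure_le_one lam) ϱ
  refine tendsto_nhds_unique hdamped ((tendsto_integral_mul_rieszLaplace hlam.le hmod hδ
    fun s hs => hsupp s (left_ne_zero_of_mul hs)).congr' ?_)
  filter_upwards [self_mem_nhdsWithin] with ε hε
  rw [integral_exp_smul_FT1_sub hφi (integrable_exp_mul_rieszMeasure hlam hε)]
  refine integral_congr_ae (ae_of_all _ fun s => ?_)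
  simp only
  rw [complexMGF_rieszMeasure hlam (by simpa using hε)]

end FourierOfRieszMeasure

section RadialCutoff

variable {d : ℕ} {ρ : Euc d → ℝ} {U : Set (Euc d)} {χ : ℝ → ℝ}

/-- The amplitude `(2π)⁻¹ χ ∘ ρ` carried by every piece `h_{λ,ℓ} ∘ ρ`. -/
def radialCutoff (χ : ℝ → ℝ) (ρ : Euc d → ℝ) (ξ : Euc d) : ℂ :=
  ((2 * Real.pi)⁻¹ * χ (ρ ξ) : ℝ)

theorem tsupport_radialCutoff_subset (χ : ℝ → ℝ) (ρ : Euc d → ℝ) :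
    tsupport (radialCutoff χ ρ) ⊆ tsupport fun ξ => χ (ρ ξ) :=
  tsupport_comp_subset (g := fun t : ℝ => (((2 * Real.pi)⁻¹ * t : ℝ) : ℂ)) (by simp)
    fun ξ => χ (ρ ξ)

theorem hasCompactSupport_radialCutoff (hχ : HasCompactSupport fun ξ => χ (ρ ξ)) :
    HasCompactSupport (radialCutoff χ ρ) :=
  hχ.comp_left (g := fun t : ℝ => (((2 * Real.pi)⁻¹ * t : ℝ) : ℂ)) (by simp)

theorem contDiff_radialCutoff (hU : IsOpen U) (hρ : ContDiffOn ℝ (⊤ : ℕ∞) ρ U)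
    (hχ : ContDiff ℝ (⊤ : ℕ∞) χ) (hχU : tsupport (fun ξ => χ (ρ ξ)) ⊆ U) :
    ContDiff ℝ (⊤ : ℕ∞) (radialCutoff χ ρ) :=
  Complex.ofRealCLM.contDiff.comp <| contDiff_const.mul <|
    contDiff_of_tsupport_subset hU (hχ.comp_contDiffOn hρ) hχU

end RadialCutoff

section Kernel

variable {d : ℕ} {lam : ℝ} {φ : ℝ → ℂ} {q : Euc d → ℂ} {ρ : Euc d → ℝ} {U : Set (Euc d)}

open FourierTransform SchwartzMap in
theorem exists_norm_pow_mul_norm_invFTd_le {m : Euc d → ℂ} (hm : ContDiff ℝ (⊤ : ℕ∞) m)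
    (hmc : HasCompactSupport m) (N : ℕ) : ∃ C : ℝ, ∀ x, ‖x‖ ^ N * ‖invFTd m x‖ ≤ C := by
  set g : 𝓢(Euc d, ℂ) := 𝓕⁻ (hmc.toSchwartzMap hm)
  have hpi : 0 < (2 * Real.pi)⁻¹ := by positivity
  have hrescale : ∀ x, invFTd m x = ((2 * Real.pi) ^ d)⁻¹ • g ((2 * Real.pi)⁻¹ • x) := fun x => by
    rw [invFTd, fourierInv_coe, Real.fourierInv_eq']
    congr 2 with ξ
    have hphase : 2 * Real.pi * ⟪ξ, (2 * Real.pi)⁻¹ • x⟫ = ⟪x, ξ⟫ := by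
      rw [inner_smul_right, real_inner_comm]
      field_simp
    rw [hphase, smul_eq_mul, mul_comm, mul_comm Complex.I]
    rfl
  obtain ⟨D, -, hD⟩ := g.decay N 0
  refine ⟨((2 * Real.pi)⁻¹ ^ N)⁻¹ * ((2 * Real.pi) ^ d)⁻¹ * D, fun x => ?_⟩
  have hDx := hD ((2 * Real.pi)⁻¹ • x)
  rw [norm_iteratedFDeriv_zero, norm_smul, Real.norm_of_nonneg hpi.le, mul_pow] at hDx
  rw [hrescale, norm_smul, Real.norm_of_nonneg (by positivity)]
  calc ‖x‖ ^ N * (((2 * Real.pi) ^ d)⁻¹ * ‖g ((2 * Real.pi)⁻¹ • x)‖)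
      = ((2 * Real.pi)⁻¹ ^ N)⁻¹ * ((2 * Real.pi) ^ d)⁻¹ *
          ((2 * Real.pi)⁻¹ ^ N * ‖x‖ ^ N * ‖g ((2 * Real.pi)⁻¹ • x)‖) := by
        field_simp
    _ ≤ _ := by gcongr

/-- The multiplier `q · (((1 - ·)₊ ^ lam * φ̂) ∘ ρ)`. The `h_{λ,ℓ} ∘ ρ` are of this form, with
`q = radialCutoff χ ρ` and `φ` one of `Φ∘`, `Ψ(·/2^{ℓ-1})`. -/
def rieszMultiplier (lam : ℝ) (φ : ℝ → ℂ) (q : Euc d → ℂ) (ρ : Euc d → ℝ) (ξ : Euc d) : ℂ :=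
  q ξ * ∫ u, FT1 φ (ρ ξ - u) ∂rieszMeasure lam

theorem hfun_zero_comp (hlam : lam ≠ 0) (χ Φ Ψ : ℝ → ℝ) (ρ : Euc d → ℝ) :
    (fun ξ => hfun χ Φ Ψ lam 0 (ρ ξ)) = rieszMultiplier lam (fun s => Φ s)
      (radialCutoff χ ρ) ρ :=
  funext fun ξ => by
    simp only [hfun, rieszMultiplier, radialCutoff, integral_max_rpow_smul hlam, FT1R]
    rw [Complex.real_smul]

theorem hfun_succ_comp (hlam : lam ≠ 0) (χ Φ Ψ : ℝ → ℝ) (ρ : Euc d → ℝ) (ℓ : ℕ) :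
    (fun ξ => hfun χ Φ Ψ lam (ℓ + 1) (ρ ξ)) = rieszMultiplier lam
      (fun s => Ψ (s / 2 ^ ℓ)) (radialCutoff χ ρ) ρ :=
  funext fun ξ => by
    simp only [hfun, rieszMultiplier, radialCutoff, integral_max_rpow_smul hlam, FT1R,
      FT1_comp_div (fun s => (Ψ s : ℂ)) (pow_pos two_pos ℓ)]
    rw [Complex.real_smul]

theorem contDiff_rieszMultiplier (hlam : -1 < lam) (hφ : ContDiff ℝ (⊤ : ℕ∞) φ)
    (hφc : HasCompactSupport φ) (hU : IsOpen U) (hρ : ContDiffOn ℝ (⊤ : ℕ∞) ρ U)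
    (hq : ContDiff ℝ (⊤ : ℕ∞) q) (hsupp : tsupport q ⊆ U) :
    ContDiff ℝ (⊤ : ℕ∞) (rieszMultiplier lam φ q ρ) := by
  have := hasTemperateGrowth_rieszMeasure hlam
  obtain ⟨f, hf⟩ := exists_schwartzMap_eq_FT1 hφ hφc
  refine contDiff_of_tsupport_subset hU (hq.contDiffOn.mul ?_)
    ((tsupport_mul_subset_left).trans hsupp)
  rw [hf]
  exact (contDiff_integral_schwartzMap_sub f).comp_contDiffOn hρ

theorem integrable_mul_rieszLaplace (hlam : -1 ≤ lam) (hφ : Integrable φ) {δ : ℝ} (hδ : 0 < δ)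
    (hsupp : ∀ s, φ s ≠ 0 → δ ≤ |s|) :
    Integrable fun s : ℝ => φ s * rieszLaplace lam (s * Complex.I) := by
  refine (hφ.norm.mul_const (δ⁻¹ ^ (lam + 1) * ‖Complex.Gamma (lam + 1 : ℝ)‖)).mono'
    (hφ.aestronglyMeasurable.mul
      ((measurable_rieszLaplace lam).comp (by fun_prop)).aestronglyMeasurable)
    (ae_of_all _ fun s => ?_)
  rw [norm_mul]
  rcases eq_or_ne (φ s) 0 with hφs | hφs
  · simp [hφs]
  · gcongr
    simpa using norm_rieszLaplace_add_mul_I_le hlam (ε := 0) hδ (hsupp s hφs)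

theorem continuous_oscIntegrand (hU : IsOpen U) (hρ : ContinuousOn ρ U) (hq : Continuous q)
    (hsupp : tsupport q ⊆ U) (x : Euc d) : Continuous fun p : Euc d × ℝ =>
      q p.1 * Complex.exp (Complex.I * (⟪x, p.1⟫ - p.2 * ρ p.1 : ℝ)) := by
  have hρ' : ContinuousOn (fun p : Euc d × ℝ => ρ p.1) (Prod.fst ⁻¹' U) :=
    hρ.comp continuousOn_fst fun _ hp => hp
  exact continuous_mul_of_tsupport_subset (hU.preimage continuous_fst) (hq.comp continuous_fst)
    (continuousOn_const.mul (Complex.continuous_ofReal.comp_continuousOn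
      ((Continuous.continuousOn (by fun_prop)).sub (continuousOn_snd.mul hρ')))).cexp
    ((tsupport_comp_subset_preimage q continuous_fst).trans
      (Set.preimage_mono hsupp))

theorem invFTd_rieszMultiplier (hlam : -1 < lam) (hφ : ContDiff ℝ (⊤ : ℕ∞) φ)
    (hφc : HasCompactSupport φ) {δ : ℝ} (hδ : 0 < δ) (hφδ : ∀ s, φ s ≠ 0 → δ ≤ |s|)
    (hU : IsOpen U) (hρ : ContinuousOn ρ U) (hq : Continuous q) (hqc : HasCompactSupport q)
    (hsupp : tsupport q ⊆ U) (x : Euc d) :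
    invFTd (rieszMultiplier lam φ q ρ) x = ((2 * Real.pi) ^ d)⁻¹ •
      ∫ s : ℝ, φ s * rieszLaplace lam (s * Complex.I) * oscIntegral q ρ x s := by
  set A : Euc d → ℝ → ℂ := fun ξ s => φ s * rieszLaplace lam (s * Complex.I) *
    (q ξ * Complex.exp (Complex.I * (⟪x, ξ⟫ - s * ρ ξ : ℝ))) with hA
  have hweight := integrable_mul_rieszLaplace hlam.le
    (hφ.continuous.integrable_of_hasCompactSupport hφc) hδ hφδ
  have hint : Integrable (Function.uncurry A) (volume.prod volume) := by
    refine ((hq.integrable_of_hasCompactSupport hqc).mul_prod hweight).mono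
      (hweight.aestronglyMeasurable.comp_snd.mul
        (continuous_oscIntegrand hU hρ hq hsupp x).aestronglyMeasurable)
      (ae_of_all _ fun p => le_of_eq ?_)
    simp only [hA, Function.uncurry_def, norm_mul, mul_comm Complex.I,
      Complex.norm_exp_ofReal_mul_I, mul_one]
    ring
  have hslice : ∀ ξ, rieszMultiplier lam φ q ρ ξ * Complex.exp (Complex.I * (⟪x, ξ⟫ : ℂ)) =
      ∫ s, A ξ s := fun ξ => by
    rw [rieszMultiplier, integral_FT1_sub_rieszMeasure hlam hφ hφc hδ hφδ, mul_assoc, mul_comm,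
      ← integral_mul_const, ← integral_mul_const]
    refine integral_congr_ae (ae_of_all _ fun s => ?_)
    simp only [hA]
    push_cast
    rw [mul_sub, sub_eq_add_neg, Complex.exp_add]
    ring_nf
  simp only [invFTd, hslice, oscIntegral, ← integral_const_mul]
  rw [integral_integral_swap hint]

theorem norm_invFTd_rieszMultiplier_le (hlam : -1 < lam) (hφ : ContDiff ℝ (⊤ : ℕ∞) φ)
    (hφc : HasCompactSupport φ) {δ : ℝ} (hδ : 0 < δ) (hφδ : ∀ s, φ s ≠ 0 → δ ≤ |s|)
    (hU : IsOpen U) (hρ : ContinuousOn ρ U) (hq : Continuous q) (hqc : HasCompactSupport q)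
    (hsupp : tsupport q ⊆ U) {x : Euc d} {D : ℝ}
    (hD : ∀ s, φ s ≠ 0 → ‖oscIntegral q ρ x s‖ ≤ D) :
    ‖invFTd (rieszMultiplier lam φ q ρ) x‖ ≤ ((2 * Real.pi) ^ d)⁻¹ *
      (δ⁻¹ ^ (lam + 1) * ‖Complex.Gamma (lam + 1 : ℝ)‖) * (∫ s, ‖φ s‖) * D := by
  set M := δ⁻¹ ^ (lam + 1) * ‖Complex.Gamma (lam + 1 : ℝ)‖ with hM
  rw [invFTd_rieszMultiplier hlam hφ hφc hδ hφδ hU hρ hq hqc hsupp, norm_smul,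
    Real.norm_of_nonneg (by positivity), mul_assoc, mul_assoc]
  gcongr
  calc _ ≤ ∫ s, ‖φ s‖ * (M * D) := by
        refine norm_integral_le_of_norm_le
          ((hφ.continuous.integrable_of_hasCompactSupport hφc).norm.mul_const _)
          (ae_of_all _ fun s => ?_)
        rw [norm_mul, norm_mul, mul_assoc]
        rcases eq_or_ne (φ s) 0 with hφs | hφs
        · simp [hφs]
        · gcongr
          · simpa [hM] using norm_rieszLaplace_add_mul_I_le hlam.le (ε := 0) hδ (hφδ s hφs)
          · exact hD s hφs
    _ = M * ((∫ s, ‖φ s‖) * D) := by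
        rw [integral_mul_const]
        ring

end Kernel

section Dilation

variable {d : ℕ} {lam α β : ℝ} {ψ : ℝ → ℂ} {q : Euc d → ℂ} {ρ : Euc d → ℝ} {U : Set (Euc d)}

theorem exists_norm_invFTd_rieszMultiplier_comp_div_le (hlam : -1 < lam)
    (hψ : ContDiff ℝ (⊤ : ℕ∞) ψ) (hψc : HasCompactSupport ψ) (hα : 0 < α)
    (hψα : ∀ s, ψ s ≠ 0 → α ≤ |s|) (hU : IsOpen U) (hρ : ContinuousOn ρ U) (hq : Continuous q)
    (hqc : HasCompactSupport q) (hsupp : tsupport q ⊆ U) :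
    ∃ A : ℝ, 0 ≤ A ∧ ∀ r : ℝ, 1 ≤ r → ∀ (x : Euc d) (D : ℝ),
      (∀ s, ψ (s / r) ≠ 0 → ‖oscIntegral q ρ x s‖ ≤ D) →
        ‖invFTd (rieszMultiplier lam (fun s => ψ (s / r)) q ρ) x‖ ≤ A * r * D := by
  refine ⟨((2 * Real.pi) ^ d)⁻¹ * (α⁻¹ ^ (lam + 1) * ‖Complex.Gamma (lam + 1 : ℝ)‖) *
    ∫ s, ‖ψ s‖, by positivity, fun r hr x D hD => ?_⟩
  have hr0 : 0 < r := one_pos.trans_le hr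
  have hαr : ∀ s, ψ (s / r) ≠ 0 → α ≤ |s| := fun s hs => by
    have := hψα _ hs
    rw [abs_div, abs_of_pos hr0] at this
    exact this.trans (div_le_self (abs_nonneg s) hr)
  have hcomp : HasCompactSupport fun s => ψ (s / r) := by
    simpa only [Function.comp_def, smul_eq_mul, inv_mul_eq_div]
      using hψc.comp_smul (inv_ne_zero hr0.ne')
  have hmass : ∫ s, ‖ψ (s / r)‖ = r * ∫ s, ‖ψ s‖ := by
    rw [Measure.integral_comp_div (fun s => ‖ψ s‖) r, abs_of_pos hr0, smul_eq_mul]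
  have hsmooth : ContDiff ℝ (⊤ : ℕ∞) fun s => ψ (s / r) := hψ.comp (contDiff_id.div_const r)
  refine (norm_invFTd_rieszMultiplier_le hlam hsmooth hcomp hα hαr hU hρ hq hqc hsupp
    hD).trans_eq ?_
  rw [hmass]
  ring

theorem exists_norm_invFTd_rieszMultiplier_comp_div_le_of_le_norm (hlam : -1 < lam)
    (hψ : ContDiff ℝ (⊤ : ℕ∞) ψ) (hα : 0 < α) (hβ : 0 < β)
    (hψs : ∀ s, ψ s ≠ 0 → α ≤ |s| ∧ |s| ≤ β) (hU : IsOpen U)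
    (hρ : ContDiffOn ℝ (⊤ : ℕ∞) ρ U) (hq : ContDiff ℝ (⊤ : ℕ∞) q) (hqc : HasCompactSupport q)
    (hsupp : tsupport q ⊆ U) {c : ℝ} (hc : ∀ ξ ∈ tsupport q, c * ‖fderiv ℝ ρ ξ‖ < 1) (N : ℕ) :
    ∃ C : ℝ, ∀ r : ℝ, 1 ≤ r → ∀ x : Euc d, β * r ≤ c * ‖x‖ →
      ‖invFTd (rieszMultiplier lam (fun s => ψ (s / r)) q ρ) x‖ ≤ C * (‖x‖ ^ N)⁻¹ := by
  obtain ⟨A, hA, hkernel⟩ := exists_norm_invFTd_rieszMultiplier_comp_div_le hlam hψ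
    (hasCompactSupport_of_abs_le fun s hs => (hψs s hs).2) hα (fun s hs => (hψs s hs).1) hU
    hρ.continuousOn hq.continuous hqc hsupp
  obtain ⟨B, hB, hosc⟩ := exists_norm_oscIntegral_le_of_le_norm hU hρ hq hqc hsupp hc (N + 1)
  refine ⟨A * |c / β| * B, fun r hr x hx => ?_⟩
  have hr0 : 0 < r := one_pos.trans_le hr
  have hx0 : 0 < ‖x‖ := by
    refine (norm_nonneg x).lt_of_ne fun h => ?_
    rw [← h, mul_zero] at hx
    exact absurd hx (mul_pos hβ hr0).not_ge
  have hrx : r ≤ |c / β| * ‖x‖ := by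
    refine le_trans ?_ (mul_le_mul_of_nonneg_right (le_abs_self _) hx0.le)
    rwa [div_mul_eq_mul_div, le_div_iff₀' hβ]
  calc _ ≤ A * r * (B * (‖x‖ ^ (N + 1))⁻¹) := hkernel r hr x _ fun s hs => by
        refine hosc x (norm_pos_iff.1 hx0) s (le_trans ?_ hx)
        have := (hψs _ hs).2
        rwa [abs_div, abs_of_pos hr0, div_le_iff₀ hr0] at this
    _ ≤ A * (|c / β| * ‖x‖) * (B * (‖x‖ ^ (N + 1))⁻¹) := by gcongr
    _ = A * |c / β| * B * (‖x‖ ^ N)⁻¹ := by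
        rw [pow_succ]
        field_simp

theorem exists_norm_invFTd_rieszMultiplier_comp_div_le_of_norm_le (hlam : -1 < lam)
    (hψ : ContDiff ℝ (⊤ : ℕ∞) ψ) (hψc : HasCompactSupport ψ) (hα : 0 < α)
    (hψα : ∀ s, ψ s ≠ 0 → α ≤ |s|) (hU : IsOpen U) (hρ : ContDiffOn ℝ (⊤ : ℕ∞) ρ U)
    (hq : ContDiff ℝ (⊤ : ℕ∞) q) (hqc : HasCompactSupport q) (hsupp : tsupport q ⊆ U) {c : ℝ}
    (hc : ∀ ξ ∈ tsupport q, c < ‖fderiv ℝ ρ ξ‖) (N : ℕ) :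
    ∃ C : ℝ, ∀ r : ℝ, 1 ≤ r → ∀ x : Euc d, ‖x‖ ≤ c * (α * r) →
      ‖invFTd (rieszMultiplier lam (fun s => ψ (s / r)) q ρ) x‖ ≤ C * (r ^ N)⁻¹ := by
  obtain ⟨A, -, hkernel⟩ := exists_norm_invFTd_rieszMultiplier_comp_div_le hlam hψ hψc hα hψα
    hU hρ.continuousOn hq.continuous hqc hsupp
  obtain ⟨B, hB, hosc⟩ := exists_norm_oscIntegral_le_of_norm_le hU hρ hq hqc hsupp hc (N + 1)
  refine ⟨A * B * (α ^ (N + 1))⁻¹, fun r hr x hx => ?_⟩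
  have hr0 : 0 < r := one_pos.trans_le hr
  have hc0 : 0 ≤ c := nonneg_of_mul_nonneg_left ((norm_nonneg x).trans hx) (mul_pos hα hr0)
  calc _ ≤ A * r * (B * ((α * r) ^ (N + 1))⁻¹) := hkernel r hr x _ fun s hs => by
        have hs' : α * r ≤ |s| := by
          have := hψα _ hs
          rwa [abs_div, abs_of_pos hr0, le_div_iff₀ hr0] at this
        have hs0 : s ≠ 0 := abs_pos.1 ((mul_pos hα hr0).trans_le hs')
        refine (hosc s hs0 x (hx.trans (by gcongr))).trans ?_
        gcongr
    _ = A * B * (α ^ (N + 1))⁻¹ * (r ^ N)⁻¹ := by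
        rw [mul_pow, pow_succ r]
        field_simp

end Dilation

section EssentialSupport

variable {d : ℕ} {ρ : Euc d → ℝ} {U : Set (Euc d)} {lam : ℝ} {χ Φ Ψ : ℝ → ℝ}

theorem exists_norm_invFTd_hfun_zero_le (hlam : -1 < lam) (hlam0 : lam ≠ 0) (hU : IsOpen U)
    (hρ : ContDiffOn ℝ (⊤ : ℕ∞) ρ U) (hχ : ContDiff ℝ (⊤ : ℕ∞) χ)
    (hχc : HasCompactSupport fun ξ => χ (ρ ξ)) (hχU : tsupport (fun ξ => χ (ρ ξ)) ⊆ U)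
    (hΦ : ContDiff ℝ (⊤ : ℕ∞) Φ) (hΦc : HasCompactSupport Φ) (N : ℕ) :
    ∃ C : ℝ, ∀ x, ‖x‖ ^ N * ‖invFTd (fun ξ => hfun χ Φ Ψ lam 0 (ρ ξ)) x‖ ≤ C := by
  rw [hfun_zero_comp hlam0]
  exact exists_norm_pow_mul_norm_invFTd_le
    (contDiff_rieszMultiplier hlam (Complex.ofRealCLM.contDiff.comp hΦ)
      (hΦc.comp_left Complex.ofReal_zero) hU hρ (contDiff_radialCutoff hU hρ hχ hχU)
      ((tsupport_radialCutoff_subset χ ρ).trans hχU))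
    (hasCompactSupport_radialCutoff hχc).mul_right N

theorem exists_norm_invFTd_hfun_succ_le (hlam : -1 < lam) (hlam0 : lam ≠ 0) (hU : IsOpen U)
    (hρ : ContDiffOn ℝ (⊤ : ℕ∞) ρ U) (hχ : ContDiff ℝ (⊤ : ℕ∞) χ)
    (hχc : HasCompactSupport fun ξ => χ (ρ ξ)) (hχU : tsupport (fun ξ => χ (ρ ξ)) ⊆ U)
    (hΨ : ContDiff ℝ (⊤ : ℕ∞) Ψ) (hΨs : ∀ s, Ψ s ≠ 0 → 1 / 2 ≤ |s| ∧ |s| ≤ 2)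
    {c₀ C₀ : ℝ} (hC₀ : 0 < C₀) (hgrad : ∀ ξ ∈ tsupport fun ξ => χ (ρ ξ),
      c₀ < ‖fderiv ℝ ρ ξ‖ ∧ ‖fderiv ℝ ρ ξ‖ ≤ C₀) (N : ℕ) :
    ∃ C : ℝ, ∀ (ℓ : ℕ) (x : Euc d),
      (4 * 2 ^ (ℓ + 1) * C₀ ≤ ‖x‖ →
        ‖invFTd (fun ξ => hfun χ Φ Ψ lam (ℓ + 1) (ρ ξ)) x‖ ≤ C * (‖x‖ ^ N)⁻¹) ∧
      (‖x‖ ≤ 2 ^ (ℓ + 1) / 4 * c₀ →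
        ‖invFTd (fun ξ => hfun χ Φ Ψ lam (ℓ + 1) (ρ ξ)) x‖ ≤ C * ((2 ^ (ℓ + 1)) ^ N)⁻¹) := by
  have hψ : ContDiff ℝ (⊤ : ℕ∞) fun s => (Ψ s : ℂ) := Complex.ofRealCLM.contDiff.comp hΨ
  have hψs : ∀ s, (Ψ s : ℂ) ≠ 0 → 1 / 2 ≤ |s| ∧ |s| ≤ 2 := fun s hs =>
    hΨs s (Complex.ofReal_ne_zero.1 hs)
  have hsub := tsupport_radialCutoff_subset χ ρ
  have hq := contDiff_radialCutoff hU hρ hχ hχU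
  have hqc := hasCompactSupport_radialCutoff hχc
  obtain ⟨A, hfar⟩ := exists_norm_invFTd_rieszMultiplier_comp_div_le_of_le_norm hlam hψ
    one_half_pos two_pos hψs hU hρ hq hqc (hsub.trans hχU) (c := (4 * C₀)⁻¹)
    (fun ξ hξ => by
      rw [inv_mul_lt_one₀ (by positivity)]
      linarith [(hgrad ξ (hsub hξ)).2]) N
  obtain ⟨B, hnear⟩ := exists_norm_invFTd_rieszMultiplier_comp_div_le_of_norm_le hlam hψ
    (hasCompactSupport_of_abs_le fun s hs => (hψs s hs).2) one_half_pos
    (fun s hs => (hψs s hs).1) hU hρ hq hqc (hsub.trans hχU)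
    (fun ξ hξ => (hgrad ξ (hsub hξ)).1) N
  refine ⟨max A (B * 2 ^ N), fun ℓ x => ?_⟩
  rw [hfun_succ_comp hlam0]
  have hr : (1 : ℝ) ≤ 2 ^ ℓ := one_le_pow₀ one_le_two
  refine ⟨fun hx => (hfar _ hr x ?_).trans (by gcongr; exact le_max_left _ _),
    fun hx => (hnear _ hr x ?_).trans ?_⟩
  · rw [le_inv_mul_iff₀ (by positivity)]
    exact le_of_eq_of_le (by ring) hx
  · exact hx.trans_eq (by ring)
  · calc B * ((2 ^ ℓ) ^ N)⁻¹ = B * 2 ^ N * ((2 ^ (ℓ + 1)) ^ N)⁻¹ := by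
          rw [pow_succ, mul_pow]
          field_simp
      _ ≤ _ := by
          gcongr
          exact le_max_right _ _

theorem kernel_essential_support_general (hlam : -1 < lam) (hlam0 : lam ≠ 0) (hU : IsOpen U)
    (hρ : ContDiffOn ℝ (⊤ : ℕ∞) ρ U) (hχ : ContDiff ℝ (⊤ : ℕ∞) χ)
    (hχc : HasCompactSupport fun ξ => χ (ρ ξ)) (hχU : tsupport (fun ξ => χ (ρ ξ)) ⊆ U)
    (hΦ : ContDiff ℝ (⊤ : ℕ∞) Φ) (hΦc : HasCompactSupport Φ)
    (hΨ : ContDiff ℝ (⊤ : ℕ∞) Ψ) (hΨs : ∀ s, Ψ s ≠ 0 → 1 / 2 ≤ |s| ∧ |s| ≤ 2)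
    {c₀ C₀ : ℝ} (hC₀ : 0 < C₀) (hgrad : ∀ ξ ∈ tsupport fun ξ => χ (ρ ξ),
      c₀ < ‖fderiv ℝ ρ ξ‖ ∧ ‖fderiv ℝ ρ ξ‖ ≤ C₀) (N : ℕ) :
    ∃ C : ℝ, ∀ (ℓ : ℕ) (x : Euc d),
      ((2:ℝ) ^ ((ℓ : ℤ) + 2) * C₀ ≤ ‖x‖ →
        ‖invFTd (fun ξ => hfun χ Φ Ψ lam ℓ (ρ ξ)) x‖ ≤ C * ‖x‖ ^ (-(N : ℝ))) ∧
      (‖x‖ ≤ (2:ℝ) ^ ((ℓ : ℤ) - 2) * c₀ →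
        ‖invFTd (fun ξ => hfun χ Φ Ψ lam ℓ (ρ ξ)) x‖ ≤ C * (2:ℝ) ^ (-(ℓ : ℝ) * (N : ℝ))) := by
  obtain ⟨A, hA⟩ := exists_norm_invFTd_hfun_zero_le (Ψ := Ψ) hlam hlam0 hU hρ hχ hχc hχU hΦ hΦc N
  obtain ⟨B, hB⟩ := exists_norm_invFTd_hfun_zero_le (Ψ := Ψ) hlam hlam0 hU hρ hχ hχc hχU hΦ hΦc 0
  obtain ⟨D, hD⟩ := exists_norm_invFTd_hfun_succ_le (Φ := Φ) hlam hlam0 hU hρ hχ hχc hχU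
    hΨ hΨs hC₀ hgrad N
  refine ⟨max (max A B) D, fun ℓ x => ?_⟩
  have hfar : (2 : ℝ) ^ ((ℓ : ℤ) + 2) = 4 * 2 ^ ℓ := by
    rw [zpow_add₀ two_ne_zero, zpow_natCast, mul_comm]
    norm_num
  have hnear : (2 : ℝ) ^ ((ℓ : ℤ) - 2) = 2 ^ ℓ / 4 := by
    rw [zpow_sub₀ two_ne_zero, zpow_natCast]
    norm_num
  rw [hfar, hnear, Real.rpow_neg (norm_nonneg x), Real.rpow_natCast, neg_mul,
    Real.rpow_neg zero_le_two, Real.rpow_mul zero_le_two, Real.rpow_natCast, Real.rpow_natCast]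
  cases ℓ with
  | zero =>
    refine ⟨fun hx => ?_, fun _ => ?_⟩
    · have hx0 : 0 < ‖x‖ := lt_of_lt_of_le (by positivity) hx
      rw [← div_eq_mul_inv, le_div_iff₀' (by positivity)]
      exact (hA x).trans ((le_max_left A B).trans (le_max_left _ _))
    · simpa only [pow_zero, one_pow, inv_one, mul_one, one_mul]
        using (hB x).trans ((le_max_right A B).trans (le_max_left _ D))
  | succ ℓ =>
    refine ⟨fun hx => ((hD ℓ x).1 hx).trans ?_, fun hx => ((hD ℓ x).2 hx).trans ?_⟩ <;>
    · gcongr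
      exact le_max_right _ _

end EssentialSupport

namespace IsMinkowskiGauge

variable {d : ℕ} {Ω : Set (Euc d)} {ρ : Euc d → ℝ}

theorem continuous (hρ : IsMinkowskiGauge d Ω ρ) : Continuous ρ :=
  hρ.eq_gauge ▸ continuous_gauge hρ.convex (hρ.isOpen.mem_nhds hρ.zero_mem)

theorem map_zero (hρ : IsMinkowskiGauge d Ω ρ) : ρ 0 = 0 := by
  rw [hρ.eq_gauge, gauge_zero]

theorem isCompact_preimage_Icc (hρ : IsMinkowskiGauge d Ω ρ) (a b : ℝ) :
    IsCompact (ρ ⁻¹' Set.Icc a b) := by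
  obtain ⟨R, hR, hΩR⟩ := hρ.isBounded.subset_closedBall_lt 0 0
  refine (isCompact_closedBall (0 : Euc d) (b * R)).of_isClosed_subset
    (isClosed_Icc.preimage hρ.continuous) fun ξ hξ => mem_closedBall_zero_iff.2 ?_
  have hgauge : ‖ξ‖ / R ≤ ρ ξ := hρ.eq_gauge ▸ le_gauge_of_subset_closedBall
    (absorbent_nhds_zero (hρ.isOpen.mem_nhds hρ.zero_mem)) hR.le hΩR
  exact (div_le_iff₀ hR).1 (hgauge.trans hξ.2)

theorem tsupport_comp_subset_preimage_Icc (hρ : IsMinkowskiGauge d Ω ρ) {χ : ℝ → ℝ} {a b : ℝ}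
    (hχ : Function.support χ ⊆ Set.Icc a b) :
    tsupport (fun ξ => χ (ρ ξ)) ⊆ ρ ⁻¹' Set.Icc a b :=
  closure_minimal (fun _ hξ => hχ hξ) (isClosed_Icc.preimage hρ.continuous)

theorem hasCompactSupport_comp (hρ : IsMinkowskiGauge d Ω ρ) {χ : ℝ → ℝ} {a b : ℝ}
    (hχ : Function.support χ ⊆ Set.Icc a b) : HasCompactSupport fun ξ => χ (ρ ξ) :=
  HasCompactSupport.of_support_subset_isCompact (hρ.isCompact_preimage_Icc a b)
    (subset_closure.trans (hρ.tsupport_comp_subset_preimage_Icc hχ))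

theorem tsupport_comp_subset_compl_zero (hρ : IsMinkowskiGauge d Ω ρ) {χ : ℝ → ℝ} {a b : ℝ}
    (ha : 0 < a) (hχ : Function.support χ ⊆ Set.Icc a b) :
    tsupport (fun ξ => χ (ρ ξ)) ⊆ {0}ᶜ := fun ξ hξ h0 => by
  have haξ : a ≤ ρ ξ := (hρ.tsupport_comp_subset_preimage_Icc hχ hξ).1
  rw [Set.mem_singleton_iff.1 h0, hρ.map_zero] at haξ
  exact ha.not_ge haξ

end IsMinkowskiGauge

namespace HData

variable {lam : ℝ} {N0 : ℕ} {χ Φ Ψ : ℝ → ℝ}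

theorem support_χ_subset_Icc (h : HData lam N0 χ Φ Ψ) :
    Function.support χ ⊆ Set.Icc (1 / 2) 2 :=
  h.hχsupp.trans Set.Ioo_subset_Icc_self

theorem hasCompactSupport_Φ (h : HData lam N0 χ Φ Ψ) : HasCompactSupport Φ :=
  hasCompactSupport_of_abs_le (b := 1) fun s hs =>
    le_of_not_ge fun hs1 => hs (h.hΦzero s hs1)

theorem contDiff_Ψ (h : HData lam N0 χ Φ Ψ) : ContDiff ℝ (⊤ : ℕ∞) Ψ := by
  rw [h.hΨ]
  exact (h.hΦsm.comp (contDiff_id.div_const 2)).sub h.hΦsm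

theorem half_le_abs_and_abs_le_two (h : HData lam N0 χ Φ Ψ) {s : ℝ} (hs : Ψ s ≠ 0) :
    1 / 2 ≤ |s| ∧ |s| ≤ 2 := by
  rw [h.hΨ] at hs
  have hhalf : |s / 2| = |s| / 2 := by rw [abs_div, abs_two]
  constructor
  · contrapose! hs
    rw [h.hΦone s hs.le, h.hΦone (s / 2) (by linarith [abs_nonneg s]), sub_self]
  · contrapose! hs
    rw [h.hΦzero s (by linarith), h.hΦzero (s / 2) (by linarith), sub_self]

end HData

/-- The kernels `K_{λ,ℓ} = 𝓕⁻¹[h_{λ,ℓ} ∘ ρ]` are essentially supported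
in the annulus `{c₀ 2^{ℓ-2} ≤ |x| ≤ C₀ 2^{ℓ+2}}`. -/
theorem kernel_essential_support
    (d : ℕ) (hd : 2 ≤ d) (Ω : Set (Euc d)) (ρ : Euc d → ℝ)
    (hρ : IsMinkowskiGauge d Ω ρ)
    (lam : ℝ) (hlam : 0 < lam) (N0 : ℕ) (hN0 : d < N0)
    (χ Φ Ψ : ℝ → ℝ) (hH : HData lam N0 χ Φ Ψ)
    (c0 C0 : ℝ) (hc0 : 0 < c0) (hC0 : 0 < C0)
    (hgrad : ∀ ξ : Euc d, ξ ≠ 0 → c0 < ‖fderiv ℝ ρ ξ‖ ∧ ‖fderiv ℝ ρ ξ‖ ≤ C0) :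
    ∀ N : ℕ, ∃ C : ℝ, ∀ (ℓ : ℕ) (x : Euc d),
      ((2:ℝ) ^ ((ℓ : ℤ) + 2) * C0 ≤ ‖x‖ →
        ‖invFTd (fun ξ => hfun χ Φ Ψ lam ℓ (ρ ξ)) x‖ ≤ C * ‖x‖ ^ (-(N : ℝ))) ∧
      (‖x‖ ≤ (2:ℝ) ^ ((ℓ : ℤ) - 2) * c0 →
        ‖invFTd (fun ξ => hfun χ Φ Ψ lam ℓ (ρ ξ)) x‖ ≤ C * (2:ℝ) ^ (-(ℓ : ℝ) * (N : ℝ))) := by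
  have hχ := hH.support_χ_subset_Icc
  exact kernel_essential_support_general (by linarith) hlam.ne' isOpen_compl_singleton hρ.smooth
    hH.hχsm (hρ.hasCompactSupport_comp hχ) (hρ.tsupport_comp_subset_compl_zero one_half_pos hχ)
    hH.hΦsm hH.hasCompactSupport_Φ hH.contDiff_Ψ (fun _ => hH.half_le_abs_and_abs_le_two) hC0
    fun ξ hξ => hgrad ξ (hρ.tsupport_comp_subset_compl_zero one_half_pos hχ hξ)
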